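/- (Theorem 11: inner bound on the ID capacity region of the BC with one-sided feedback.) The ID capacity region 𝒞_{1-fb} of the BC W(y,z|x) with one-sided feedback from Terminal 𝒴 contains the set of all rate pairs (R_𝒴, R_𝒵) ∈ [0,∞)² for which some PMF P on 𝒳 satisfies R_𝒴 ≤ H(PW_𝒴)·𝟙{max_{P'} I(P', W_𝒴) > 0} and R_𝒵 ≤ I(P, W_𝒵). -/

import Mathlib

open scoped Classical
open Finset

noncomputable section

/-- `P` is a probability mass function on the finite type `X`. -/
def IsPMF {X : Type*} [Fintype X] (P : X → ℝ) : Prop :=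
  (∀ x, 0 ≤ P x) ∧ ∑ x, P x = 1

/-- `W` is a (discrete memoryless) channel from `X` to `Y`. -/
def IsChannel {X Y : Type*} [Fintype Y] (W : X → Y → ℝ) : Prop :=
  (∀ x y, 0 ≤ W x y) ∧ ∀ x, ∑ y, W x y = 1

/-- The `n`-fold memoryless extension `W^n(𝐲|𝐱) = ∏ᵢ W(yᵢ|xᵢ)`. -/
def Wn {X Y : Type*} (W : X → Y → ℝ) (n : ℕ) (x : Fin n → X) (y : Fin n → Y) : ℝ :=
  ∏ i, W (x i) (y i)

/-- Mutual information `I(P,W)` (natural logarithm), with the convention that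
terms with `P x * W x y = 0` contribute `0`. -/
def mutInf {X Y : Type*} [Fintype X] [Fintype Y] (P : X → ℝ) (W : X → Y → ℝ) : ℝ :=
  ∑ x, ∑ y, if P x * W x y = 0 then 0
    else P x * W x y * Real.log (W x y / ∑ x', P x' * W x' y)

/-- The error requirements of an `(n, M, l1, l2)` ID code for the DMC `W`:
maximum probability of missed identification at most `l1`, maximum probability
of wrong identification at most `l2`. -/
def IDCodeErr {X Y M : Type*} [Fintype X] [Fintype Y]
    (n : ℕ) (W : X → Y → ℝ) (Q : M → (Fin n → X) → ℝ)
    (D : M → Finset (Fin n → Y)) (l1 l2 : ℝ) : Prop :=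
  (∀ m, ∑ x, Q m x * ∑ y ∈ (D m)ᶜ, Wn W n x y ≤ l1) ∧
  (∀ m m', m ≠ m' → ∑ x, Q m x * ∑ y ∈ D m', Wn W n x y ≤ l2)

/-- `(n, M, l1, l2)` ID code for the DMC `W`. -/
def IsIDCode {X Y M : Type*} [Fintype X] [Fintype Y]
    (n : ℕ) (W : X → Y → ℝ) (Q : M → (Fin n → X) → ℝ)
    (D : M → Finset (Fin n → Y)) (l1 l2 : ℝ) : Prop :=
  (∀ m, IsPMF (Q m)) ∧ IDCodeErr n W Q D l1 l2

/-- `W` is a two-receiver broadcast channel from `X` to `Y × Z`. -/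
def IsBC {X Y Z : Type*} [Fintype Y] [Fintype Z] (W : X → Y → Z → ℝ) : Prop :=
  (∀ x y z, 0 ≤ W x y z) ∧ ∀ x, ∑ y, ∑ z, W x y z = 1

/-- Marginal channel to terminal `Y`. -/
def margY {X Y Z : Type*} [Fintype Z] (W : X → Y → Z → ℝ) : X → Y → ℝ :=
  fun x y => ∑ z, W x y z

/-- Marginal channel to terminal `Z`. -/
def margZ {X Y Z : Type*} [Fintype Y] (W : X → Y → Z → ℝ) : X → Z → ℝ :=
  fun x z => ∑ y, W x y z

/-- Entropy `H(p)` of a PMF (natural logarithm), with `0 log 0 = 0`. -/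
def entH {Y : Type*} [Fintype Y] (p : Y → ℝ) : ℝ :=
  ∑ y, if p y = 0 then 0 else -(p y * Real.log (p y))

/-- Output distribution `PW` of the channel `W` under input PMF `P`. -/
def outDist {X Y : Type*} [Fintype X] (P : X → ℝ) (W : X → Y → ℝ) : Y → ℝ :=
  fun y => ∑ x, P x * W x y

/-- The joint law on `(𝐱, 𝐲, 𝐳)` induced by a feedback encoder
`Q^{(i)}(x | x^{i-1}, y^{i-1})` and the BC `W`. -/
def fbLaw {X Y Z : Type*} (n : ℕ) (W : X → Y → Z → ℝ)
    (Q : (i : ℕ) → (Fin i → X) → (Fin i → Y) → X → ℝ)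
    (x : Fin n → X) (y : Fin n → Y) (z : Fin n → Z) : ℝ :=
  ∏ i : Fin n,
    (Q i.1 (fun j : Fin i.1 => x ⟨j.1, lt_trans j.isLt i.isLt⟩)
           (fun j : Fin i.1 => y ⟨j.1, lt_trans j.isLt i.isLt⟩) (x i)
      * W (x i) (y i) (z i))

/-- `Q` is a feedback encoder for blocklength `n`: at each time `i < n` and for
all histories, it is a PMF on `X`. -/
def IsFBEncoder {X Y : Type*} [Fintype X] (n : ℕ)
    (Q : (i : ℕ) → (Fin i → X) → (Fin i → Y) → X → ℝ) : Prop :=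
  ∀ i < n, ∀ (xs : Fin i → X) (ys : Fin i → Y), IsPMF (Q i xs ys)

/-- Average-error ID code for the BC with one-sided feedback from Terminal Y. -/
def IsFBIDCode {X Y Z : Type*} [Fintype X] [Fintype Y] [Fintype Z]
    (n kY kZ : ℕ) (W : X → Y → Z → ℝ)
    (Q : Fin kY → Fin kZ → (i : ℕ) → (Fin i → X) → (Fin i → Y) → X → ℝ)
    (DY : Fin kY → Finset (Fin n → Y)) (DZ : Fin kZ → Finset (Fin n → Z))
    (l1Y l2Y l1Z l2Z : ℝ) : Prop :=
  (∀ my mz, IsFBEncoder n (Q my mz)) ∧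
  (∀ my, (kZ : ℝ)⁻¹ * ∑ mz, ∑ x : Fin n → X, ∑ y ∈ (DY my)ᶜ, ∑ z : Fin n → Z,
      fbLaw n W (Q my mz) x y z ≤ l1Y) ∧
  (∀ my my', my ≠ my' → (kZ : ℝ)⁻¹ * ∑ mz, ∑ x : Fin n → X, ∑ y ∈ DY my',
      ∑ z : Fin n → Z, fbLaw n W (Q my mz) x y z ≤ l2Y) ∧
  (∀ mz, (kY : ℝ)⁻¹ * ∑ my, ∑ x : Fin n → X, ∑ y : Fin n → Y, ∑ z ∈ (DZ mz)ᶜ,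
      fbLaw n W (Q my mz) x y z ≤ l1Z) ∧
  (∀ mz mz', mz ≠ mz' → (kY : ℝ)⁻¹ * ∑ my, ∑ x : Fin n → X, ∑ y : Fin n → Y,
      ∑ z ∈ DZ mz', fbLaw n W (Q my mz) x y z ≤ l2Z)

/-- A rate pair is achievable for the BC with one-sided feedback from
Terminal Y under the average-error criterion. -/
def FBAchievable {X Y Z : Type*} [Fintype X] [Fintype Y] [Fintype Z]
    (W : X → Y → Z → ℝ) (Rp : ℝ × ℝ) : Prop :=
  0 ≤ Rp.1 ∧ 0 ≤ Rp.2 ∧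
  ∀ l1Y l2Y l1Z l2Z : ℝ, 0 < l1Y → 0 < l2Y → 0 < l1Z → 0 < l2Z →
    ∃ n₀ : ℕ, ∀ n : ℕ, n₀ ≤ n →
      ∃ (kY kZ : ℕ)
        (Q : Fin kY → Fin kZ → (i : ℕ) → (Fin i → X) → (Fin i → Y) → X → ℝ)
        (DY : Fin kY → Finset (Fin n → Y)) (DZ : Fin kZ → Finset (Fin n → Z)),
        IsFBIDCode n kY kZ W Q DY DZ l1Y l2Y l1Z l2Z ∧
        ((0 < Rp.1 → Rp.1 ≤ (1 / n) * Real.log (Real.log kY)) ∧ (Rp.1 = 0 → kY = 1)) ∧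
        ((0 < Rp.2 → Rp.2 ≤ (1 / n) * Real.log (Real.log kZ)) ∧ (Rp.2 = 0 → kZ = 1))


/-!
The terminal without feedback is served by a random identification code: each message is sent as a
uniformly chosen entry of its own list of independent `P^n`-distributed words, and the decoder
accepts if its output is jointly typical with some word of the list. A Chernoff bound leaves room
for `exp (exp (n R))` lists whenever `R < I(P, W_Z)`, and, applied to all these lists together, it
shows that averaged over the messages the output at the other terminal is distributed essentially
as `n` independent copies of `PW_Y`.

Thanks to the feedback, the encoder knows this output, which thus is common randomness of the
encoder and its receiver. A hash function into a *constant* number of values is attached to each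
message for this receiver. Two random hash functions collide rarely, except with a probability that
is doubly exponentially small with exponent `H(PW_Y)`, because hardly any output has probability
above `exp (-n (H(PW_Y) - ε))`. The hash value of the output is finally sent in a constant number of
additional letters, which only needs `W_Y` to have positive capacity and costs no rate.
-/

open Filter Topology
open Real (exp log)

/-! ### Finite probability -/

section FiniteProbability

variable {S T : Type*} [Fintype S]

/-- The probability of the event `A` under the weights `p`. -/
def prob (p : S → ℝ) (A : Set S) : ℝ := ∑ s, A.indicator p s

lemma prob_univ (p : S → ℝ) : prob p Set.univ = ∑ s, p s := by
  simp only [prob, Set.indicator_univ]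

lemma prob_empty (p : S → ℝ) : prob p ∅ = 0 := by
  simp only [prob, Set.indicator_empty, sum_const_zero]

lemma prob_add_prob_compl (p : S → ℝ) (A : Set S) : prob p A + prob p Aᶜ = ∑ s, p s := by
  simp only [prob, ← sum_add_distrib]
  exact sum_congr rfl fun s _ => Set.indicator_self_add_compl_apply A p s

lemma prob_eq_sum_prob_inter_fiber [Fintype T] (p : S → ℝ) (A : Set S) (φ : S → T) :
    prob p A = ∑ t, prob p (A ∩ φ ⁻¹' {t}) := by
  simp only [prob]
  rw [sum_comm]
  refine sum_congr rfl fun s _ => ?_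
  rw [sum_eq_single (φ s) (fun t _ ht => Set.indicator_of_notMem (fun h => ht h.2.symm) p)
    (fun h => absurd (mem_univ _) h)]
  simp [Set.indicator_apply]

lemma prob_singleton (p : S → ℝ) (s : S) : prob p {s} = p s := by
  simp [prob, Set.indicator_apply]

lemma prob_le_mul_prob_add {q r : S → ℝ} {a l : ℝ} (hl : 0 ≤ l)
    (h : ∀ s, r s ≤ a * q s + l / Fintype.card S) (A : Set S) :
    prob r A ≤ a * prob q A + l :=
  calc prob r A ≤ ∑ s, (a * A.indicator q s + l / Fintype.card S) := by
        refine sum_le_sum fun s _ => ?_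
        by_cases hs : s ∈ A
        · simpa [hs] using h s
        · simpa [hs] using div_nonneg hl (Nat.cast_nonneg _)
    _ = a * prob q A + Fintype.card S * (l / Fintype.card S) := by
        rw [sum_add_distrib, ← mul_sum, sum_const, nsmul_eq_mul, card_univ, prob]
    _ ≤ _ := add_le_add_right (by
        rw [mul_div_left_comm]
        exact mul_le_of_le_one_right hl (div_self_le_one _)) _

variable {p : S → ℝ}

lemma IsPMF.nonempty (hp : IsPMF p) : Nonempty S := by
  by_contra h
  have := not_nonempty_iff.1 h
  simpa using hp.2

lemma IsPMF.prob_nonneg (hp : IsPMF p) (A : Set S) : 0 ≤ prob p A :=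
  sum_nonneg fun s _ => Set.indicator_nonneg (fun s _ => hp.1 s) s

lemma IsPMF.sum_mul_le (hp : IsPMF p) {f : S → ℝ} {a : ℝ} (hf : ∀ s, f s ≤ a) :
    ∑ s, p s * f s ≤ a :=
  calc ∑ s, p s * f s ≤ ∑ s, p s * a :=
        sum_le_sum fun s _ => mul_le_mul_of_nonneg_left (hf s) (hp.1 s)
    _ = a := by rw [← sum_mul, hp.2, one_mul]

lemma IsPMF.sum_mul_le_prob_add (hp : IsPMF p) {f : S → ℝ} {A : Set S} {l : ℝ} (hl : 0 ≤ l)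
    (hf : ∀ s, f s ≤ 1) (hA : ∀ s ∉ A, f s ≤ l) : ∑ s, p s * f s ≤ prob p A + l :=
  calc ∑ s, p s * f s ≤ ∑ s, (A.indicator p s + p s * l) := by
        refine sum_le_sum fun s _ => ?_
        by_cases hs : s ∈ A
        · rw [Set.indicator_of_mem hs]
          exact (mul_le_of_le_one_right (hp.1 s) (hf s)).trans
            (le_add_of_nonneg_right (mul_nonneg (hp.1 s) hl))
        · rw [Set.indicator_of_notMem hs, zero_add]
          exact mul_le_mul_of_nonneg_left (hA s hs) (hp.1 s)
    _ = prob p A + l := by rw [sum_add_distrib, ← sum_mul, hp.2, one_mul, prob]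

lemma IsPMF.prob_le_one (hp : IsPMF p) (A : Set S) : prob p A ≤ 1 := by
  rw [← hp.2, ← prob_add_prob_compl p A]
  exact le_add_of_nonneg_right (hp.prob_nonneg _)

lemma IsPMF.exists_notMem (hp : IsPMF p) {A : Set S} (h : prob p A < 1) : ∃ s, s ∉ A := by
  by_contra! hA
  rw [Set.eq_univ_of_forall hA, prob_univ, hp.2] at h
  exact lt_irrefl _ h

lemma IsPMF.prob_mono (hp : IsPMF p) {A B : Set S} (h : ∀ s ∈ A, p s ≠ 0 → s ∈ B) :
    prob p A ≤ prob p B := by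
  refine sum_le_sum fun s _ => Set.indicator_le' (fun s hs => ?_)
    (fun s _ => Set.indicator_nonneg (fun s _ => hp.1 s) s) s
  by_cases hs' : p s = 0
  · exact hs' ▸ Set.indicator_nonneg (fun s _ => hp.1 s) s
  · rw [Set.indicator_of_mem (h s hs hs')]

lemma IsPMF.prob_iUnion_le (hp : IsPMF p) {κ : Type*} [Fintype κ] (A : κ → Set S) :
    prob p (⋃ k, A k) ≤ ∑ k, prob p (A k) := by
  simp only [prob]
  rw [sum_comm]
  have h0 : ∀ s, ∀ k ∈ univ, 0 ≤ (A k).indicator p s := fun s k _ =>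
    Set.indicator_nonneg (fun s _ => hp.1 s) s
  refine sum_le_sum fun s _ => Set.indicator_le' (fun s hs => ?_)
    (fun s _ => sum_nonneg (h0 s)) s
  obtain ⟨k, hk⟩ := Set.mem_iUnion.1 hs
  exact (Set.indicator_of_mem hk p).ge.trans (single_le_sum (h0 s) (mem_univ k))

lemma IsPMF.prob_union_le (hp : IsPMF p) (A B : Set S) :
    prob p (A ∪ B) ≤ prob p A + prob p B := by
  simpa only [Set.union_eq_iUnion, Fintype.sum_bool, cond_true, cond_false] using
    hp.prob_iUnion_le fun b => cond b A B

lemma IsPMF.prob_le_sum_mul (hp : IsPMF p) {A : Set S} {f : S → ℝ} (hf : ∀ s, 0 ≤ f s)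
    (hA : ∀ s ∈ A, 1 ≤ f s) : prob p A ≤ ∑ s, p s * f s :=
  sum_le_sum fun s _ => Set.indicator_le'
    (fun s hs => le_mul_of_one_le_right (hp.1 s) (hA s hs))
    (fun s _ => mul_nonneg (hp.1 s) (hf s)) s

lemma IsPMF.prob_le_div (hp : IsPMF p) {f : S → ℝ} (hf : ∀ s, 0 ≤ f s) {t : ℝ} (ht : 0 < t) :
    prob p {s | t ≤ f s} ≤ (∑ s, p s * f s) / t := by
  simpa only [sum_div, mul_div_assoc] using hp.prob_le_sum_mul
    (A := {s | t ≤ f s}) (f := fun s => f s / t) (fun s => div_nonneg (hf s) ht.le)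
    fun s hs => (one_le_div ht).2 hs

end FiniteProbability

/-! ### Independent coordinates -/

section Independence

variable {S ι : Type*} [Fintype ι]

/-- The law of independent coordinates, the `i`-th one distributed according to `p i`. -/
def productLaw (p : ι → S → ℝ) (ω : ι → S) : ℝ := ∏ i, p i (ω i)

/-- The law of independent coordinates with common distribution `p`. -/
abbrev iid (p : S → ℝ) : (ι → S) → ℝ := productLaw fun _ => p

variable [Fintype S] [DecidableEq ι] {p : ι → S → ℝ}

lemma sum_productLaw_mul_prod (p h : ι → S → ℝ) :
    ∑ ω, productLaw p ω * ∏ i, h i (ω i) = ∏ i, ∑ s, p i s * h i s := by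
  simp only [productLaw, Fintype.prod_sum, prod_mul_distrib]

lemma isPMF_productLaw (hp : ∀ i, IsPMF (p i)) : IsPMF (productLaw p) := by
  refine ⟨fun ω => prod_nonneg fun i _ => (hp i).1 _, ?_⟩
  simpa [(hp _).2] using sum_productLaw_mul_prod p fun _ _ => 1

lemma isPMF_iid {q : S → ℝ} (hq : IsPMF q) : IsPMF (iid q : (ι → S) → ℝ) :=
  isPMF_productLaw fun _ => hq

lemma prob_productLaw_univ_pi (p : ι → S → ℝ) (A : ι → Set S) :
    prob (productLaw p) (Set.univ.pi A) = ∏ i, prob (p i) (A i) := by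
  simp only [prob, Fintype.prod_sum]
  refine sum_congr rfl fun ω _ => ?_
  by_cases h : ∀ i, ω i ∈ A i
  · rw [Set.indicator_of_mem (Set.mem_univ_pi.2 h)]
    exact prod_congr rfl fun i _ => (Set.indicator_of_mem (h i) _).symm
  · obtain ⟨i, hi⟩ := not_forall.1 h
    rw [Set.indicator_of_notMem fun h => hi (Set.mem_univ_pi.1 h i),
      prod_eq_zero (mem_univ i) (Set.indicator_of_notMem hi _)]

lemma prob_productLaw_pi (hp : ∀ i, IsPMF (p i)) (s : Finset ι) (A : ι → Set S) :
    prob (productLaw p) ((s : Set ι).pi A) = ∏ i ∈ s, prob (p i) (A i) := by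
  rw [← Set.pi_univ_ite, prob_productLaw_univ_pi, ← prod_subset (subset_univ s)]
  · exact prod_congr rfl fun i hi => by rw [if_pos (mem_coe.2 hi)]
  · exact fun i _ hi => by rw [if_neg (mt mem_coe.1 hi), prob_univ, (hp i).2]

lemma prob_productLaw_coord (hp : ∀ i, IsPMF (p i)) (i : ι) (A : Set S) :
    prob (productLaw p) {ω | ω i ∈ A} = prob (p i) A := by
  have h := prob_productLaw_pi hp {i} fun _ => A
  rwa [coe_singleton, Set.singleton_pi, prod_singleton] at h

lemma prob_productLaw_pair (hp : ∀ i, IsPMF (p i)) {i j : ι} (hij : i ≠ j) (B : S → Set S) :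
    prob (productLaw p) {ω | ω i ∈ B (ω j)} = ∑ t, p j t * prob (p i) (B t) := by
  rw [prob_eq_sum_prob_inter_fiber _ _ fun ω => ω j]
  refine sum_congr rfl fun t _ => ?_
  have hcyl : {ω : ι → S | ω i ∈ B (ω j)} ∩ (fun ω => ω j) ⁻¹' {t}
      = (({i, j} : Finset ι) : Set ι).pi fun l => if l = j then {t} else B t := by
    ext ω
    simp only [Set.mem_inter_iff, Set.mem_ofPred_eq, Set.mem_preimage, Set.mem_singleton_iff,
      Set.mem_pi, coe_insert, coe_singleton, Set.mem_insert_iff, forall_eq_or_imp, forall_eq,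
      if_neg hij, if_true]
    exact ⟨fun ⟨h, ht⟩ => ⟨ht ▸ h, ht⟩, fun ⟨h, ht⟩ => ⟨ht ▸ h, ht⟩⟩
  rw [hcyl, prob_productLaw_pi hp, prod_pair hij, if_neg hij, if_pos rfl, mul_comm]
  simp [prob, Set.indicator_apply]

end Independence

section RandomSelection

variable {S κ : Type*} [Fintype S] [Fintype κ] [DecidableEq κ] {p : S → ℝ} {β : ℝ}

lemma IsPMF.prob_iid_exists_mem_le (hp : IsPMF p) {A : Set S} (hA : prob p A ≤ β) :
    prob (iid p) {ω : κ → S | ∃ m, ω m ∈ A} ≤ Fintype.card κ * β :=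
  calc prob (iid p) {ω : κ → S | ∃ m, ω m ∈ A}
      ≤ ∑ m, prob (iid p) {ω : κ → S | ω m ∈ A} := by
        rw [Set.ofPred_exists]
        exact (isPMF_iid hp).prob_iUnion_le _
    _ ≤ ∑ _ : κ, β := sum_le_sum fun m _ =>
        (prob_productLaw_coord (fun _ => hp) m A).trans_le hA
    _ = _ := by rw [sum_const, nsmul_eq_mul, card_univ]

lemma IsPMF.prob_iid_exists_pair_mem_le (hp : IsPMF p) {B : S → Set S} (hβ : 0 ≤ β)
    (hB : ∀ t, prob p (B t) ≤ β) :
    prob (iid p) {ω : κ → S | ∃ m m', m ≠ m' ∧ ω m ∈ B (ω m')} ≤ Fintype.card κ ^ 2 * β := by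
  have hpair : ∀ m m' : κ, prob (iid p) {ω : κ → S | m ≠ m' ∧ ω m ∈ B (ω m')} ≤ β := by
    intro m m'
    by_cases h : m = m'
    · simpa [h, prob_empty] using hβ
    · simp only [ne_eq, h, not_false_eq_true, true_and]
      rw [prob_productLaw_pair (fun _ => hp) h]
      exact hp.sum_mul_le hB
  calc prob (iid p) {ω : κ → S | ∃ m m', m ≠ m' ∧ ω m ∈ B (ω m')}
      ≤ ∑ m, ∑ m', prob (iid p) {ω : κ → S | m ≠ m' ∧ ω m ∈ B (ω m')} := by
        simp only [Set.ofPred_exists]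
        exact ((isPMF_iid hp).prob_iUnion_le _).trans
          (sum_le_sum fun m _ => (isPMF_iid hp).prob_iUnion_le _)
    _ ≤ ∑ _ : κ, ∑ _ : κ, β := sum_le_sum fun m _ => sum_le_sum fun m' _ => hpair m m'
    _ = _ := by simp only [sum_const, nsmul_eq_mul, card_univ]; ring

lemma IsPMF.exists_iid_avoiding (hp : IsPMF p) {A : Set S} {B : S → Set S} {C : Set (κ → S)}
    {γ : ℝ} (hA : prob p A ≤ β) (hB : ∀ t, prob p (B t) ≤ β) (hC : prob (iid p) C ≤ γ)
    (h : (Fintype.card κ + (Fintype.card κ : ℝ) ^ 2) * β + γ < 1) :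
    ∃ ω : κ → S, (∀ m, ω m ∉ A) ∧ (∀ m m', m ≠ m' → ω m ∉ B (ω m')) ∧ ω ∉ C := by
  have hlt : prob (iid p) ({ω : κ → S | ∃ m, ω m ∈ A} ∪
      {ω | ∃ m m', m ≠ m' ∧ ω m ∈ B (ω m')} ∪ C) < 1 :=
    calc _ ≤ Fintype.card κ * β + (Fintype.card κ : ℝ) ^ 2 * β + γ :=
          ((isPMF_iid hp).prob_union_le _ _).trans <| add_le_add
            (((isPMF_iid hp).prob_union_le _ _).trans <| add_le_add (hp.prob_iid_exists_mem_le hA)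
              (hp.prob_iid_exists_pair_mem_le ((hp.prob_nonneg _).trans hA) hB)) hC
      _ < 1 := by rwa [← add_mul]
  obtain ⟨ω, hω⟩ := (isPMF_iid hp).exists_notMem hlt
  simp only [Set.mem_union, Set.mem_ofPred_eq, not_or, not_exists, not_and] at hω
  exact ⟨ω, hω.1.1, hω.1.2, hω.2⟩

end RandomSelection

/-! ### Exponential tail bounds -/

section TailBounds

variable {S ι : Type*} [Fintype S] [Fintype ι] [DecidableEq ι]

lemma prob_productLaw_le_exp_mul_prod {p : ι → S → ℝ} (hp : ∀ i, IsPMF (p i)) (f : ι → S → ℝ)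
    (τ : ℝ) : prob (productLaw p) {ω | τ ≤ ∑ i, f i (ω i)}
      ≤ exp (-τ) * ∏ i, ∑ s, p i s * exp (f i s) :=
  calc prob (productLaw p) {ω | τ ≤ ∑ i, f i (ω i)}
      ≤ ∑ ω, productLaw p ω * exp (∑ i, f i (ω i) - τ) :=
        (isPMF_productLaw hp).prob_le_sum_mul (fun _ => (Real.exp_pos _).le)
          fun ω h => Real.one_le_exp (sub_nonneg.2 h)
    _ = exp (-τ) * ∑ ω, productLaw p ω * ∏ i, exp (f i (ω i)) := by
        rw [mul_sum]
        refine sum_congr rfl fun ω _ => ?_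
        rw [← Real.exp_sum, sub_eq_add_neg, Real.exp_add]
        ring
    _ = _ := by rw [sum_productLaw_mul_prod p fun i s => exp (f i s)]

lemma exp_le_one_add_add_sq {x : ℝ} (hx : |x| ≤ 1) : exp x ≤ 1 + x + x ^ 2 := by
  linarith [(abs_le.1 (Real.abs_exp_sub_one_sub_id_le hx)).2]

lemma prob_productLaw_le_sum_le_exp {p f : ι → S → ℝ} (hp : ∀ i, IsPMF (p i)) {b τ : ℝ}
    (hb : 0 < b) (h0 : ∀ i s, 0 ≤ f i s) (h1 : ∀ i s, f i s ≤ b)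
    (hτ : 3 * ∑ i, ∑ s, p i s * f i s ≤ τ) :
    prob (productLaw p) {ω | τ ≤ ∑ i, f i (ω i)} ≤ exp (-(τ / (3 * b))) := by
  have hmgf : ∀ i, ∑ s, p i s * exp (f i s / b) ≤ exp (2 * (∑ s, p i s * f i s) / b) := by
    intro i
    have hpoint : ∀ s, exp (f i s / b) ≤ 1 + 2 * (f i s / b) := fun s => by
      have hnonneg : 0 ≤ f i s / b := div_nonneg (h0 i s) hb.le
      have hle : f i s / b ≤ 1 := (div_le_one hb).2 (h1 i s)
      nlinarith [exp_le_one_add_add_sq (abs_le.2 ⟨by linarith, hle⟩)]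
    calc ∑ s, p i s * exp (f i s / b) ≤ ∑ s, p i s * (1 + 2 * (f i s / b)) :=
          sum_le_sum fun s _ => mul_le_mul_of_nonneg_left (hpoint s) ((hp i).1 s)
      _ = 2 * (∑ s, p i s * f i s) / b + ∑ s, p i s := by
          rw [mul_sum, sum_div, ← sum_add_distrib]
          exact sum_congr rfl fun s _ => by ring
      _ = 2 * (∑ s, p i s * f i s) / b + 1 := by rw [(hp i).2]
      _ ≤ _ := Real.add_one_le_exp _
  calc prob (productLaw p) {ω | τ ≤ ∑ i, f i (ω i)}
      = prob (productLaw p) {ω | τ / b ≤ ∑ i, f i (ω i) / b} := by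
        simp only [← sum_div, div_le_div_iff_of_pos_right hb]
    _ ≤ exp (-(τ / b)) * ∏ i, ∑ s, p i s * exp (f i s / b) :=
        prob_productLaw_le_exp_mul_prod hp (fun i s => f i s / b) _
    _ ≤ exp (-(τ / b)) * ∏ i, exp (2 * (∑ s, p i s * f i s) / b) :=
        mul_le_mul_of_nonneg_left (prod_le_prod (fun i _ => sum_nonneg fun s _ =>
          mul_nonneg ((hp i).1 s) (Real.exp_pos _).le) fun i _ => hmgf i) (Real.exp_pos _).le
    _ = exp ((2 * ∑ i, ∑ s, p i s * f i s - τ) / b) := by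
        rw [← Real.exp_sum, ← Real.exp_add, ← sum_div, ← mul_sum]
        ring_nf
    _ ≤ exp (-(τ / (3 * b))) := by
        rw [Real.exp_le_exp, div_mul_eq_div_div, ← neg_div]
        gcongr
        linarith

lemma prob_iid_sum_le_le_exp {p : S → ℝ} (hp : IsPMF p) {g : S → ℝ} {μ B ε : ℝ}
    (hμ : ∑ s, p s * g s = μ) (hB : 0 < B) (hg : ∀ s, |μ - g s| ≤ B) (hε : 0 ≤ ε)
    (hεB : ε ≤ B) :
    prob (iid p) {ω : ι → S | ∑ i, g (ω i) ≤ Fintype.card ι * (μ - ε)}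
      ≤ exp (-(Fintype.card ι * (ε / (2 * B)) ^ 2)) := by
  set t := ε / (2 * B ^ 2) with ht
  have ht0 : 0 ≤ t := by positivity
  have htB : t * B = ε / (2 * B) := by rw [ht]; field_simp
  have htε : t * ε = 2 * (t * B) ^ 2 := by rw [ht]; field_simp
  have habs : ∀ s, |t * (μ - g s)| ≤ t * B := fun s => by
    rw [abs_mul, abs_of_nonneg ht0]
    exact mul_le_mul_of_nonneg_left (hg s) ht0
  have hmgf : ∑ s, p s * exp (t * (μ - g s)) ≤ exp ((t * B) ^ 2) := by
    have htB1 : t * B ≤ 1 := by rw [htB, div_le_one (by positivity)]; linarith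
    calc ∑ s, p s * exp (t * (μ - g s)) ≤ ∑ s, p s * (1 + t * (μ - g s) + (t * B) ^ 2) :=
          sum_le_sum fun s _ => mul_le_mul_of_nonneg_left
            ((exp_le_one_add_add_sq ((habs s).trans htB1)).trans
              (add_le_add_right (sq_le_sq' (abs_le.1 (habs s)).1 (abs_le.1 (habs s)).2) _)) (hp.1 s)
      _ = (1 + t * μ + (t * B) ^ 2) * ∑ s, p s - t * ∑ s, p s * g s := by
          rw [mul_sum, mul_sum, ← sum_sub_distrib]
          exact sum_congr rfl fun s _ => by ring
      _ = (t * B) ^ 2 + 1 := by rw [hp.2, hμ]; ring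
      _ ≤ _ := Real.add_one_le_exp _
  have hevent : {ω : ι → S | ∑ i, g (ω i) ≤ Fintype.card ι * (μ - ε)}
      ⊆ {ω | Fintype.card ι * (t * ε) ≤ ∑ i, t * (μ - g (ω i))} := fun ω hω => by
    simp only [Set.mem_ofPred_eq, ← mul_sum, sum_sub_distrib, sum_const, nsmul_eq_mul,
      card_univ] at hω ⊢
    nlinarith [mul_le_mul_of_nonneg_left hω ht0]
  calc _ ≤ prob (iid p) {ω : ι → S | Fintype.card ι * (t * ε) ≤ ∑ i, t * (μ - g (ω i))} :=
        (isPMF_iid hp).prob_mono fun ω hω _ => hevent hω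
    _ ≤ exp (-(Fintype.card ι * (t * ε))) * ∏ _ : ι, exp ((t * B) ^ 2) :=
        (prob_productLaw_le_exp_mul_prod (fun _ => hp) (fun _ s => t * (μ - g s)) _).trans <|
          mul_le_mul_of_nonneg_left (prod_le_prod (fun _ _ => sum_nonneg fun s _ =>
            mul_nonneg (hp.1 s) (Real.exp_pos _).le) fun _ _ => hmgf) (Real.exp_pos _).le
    _ = _ := by
        rw [prod_const, card_univ, ← Real.exp_nat_mul, ← Real.exp_add, htε, ← htB]
        ring_nf

lemma tendsto_prob_iid_sum_le {p : S → ℝ} (hp : IsPMF p) (g : S → ℝ) {ε : ℝ} (hε : 0 < ε) :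
    Tendsto (fun n : ℕ => prob (iid p)
      {ω : Fin n → S | ∑ i, g (ω i) ≤ n * (∑ s, p s * g s - ε)}) atTop (𝓝 0) := by
  set μ := ∑ s, p s * g s with hμ
  set B := ε + ∑ s, |μ - g s|
  have hsum : ∀ s, |μ - g s| ≤ ∑ s, |μ - g s| := fun s =>
    single_le_sum (f := fun s => |μ - g s|) (fun s _ => abs_nonneg _) (mem_univ s)
  have hεB : ε ≤ B := le_add_of_nonneg_right (sum_nonneg fun s _ => abs_nonneg _)
  have hexp : Tendsto (fun n : ℕ => exp (-(n * (ε / (2 * B)) ^ 2))) atTop (𝓝 0) :=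
    Real.tendsto_exp_neg_atTop_nhds_zero.comp
      (tendsto_natCast_atTop_atTop.atTop_mul_const (by positivity))
  refine squeeze_zero (fun n => (isPMF_iid hp).prob_nonneg _) (fun n => ?_) hexp
  simpa only [Fintype.card_fin] using prob_iid_sum_le_le_exp (ι := Fin n) hp hμ.symm
    (hε.trans_le hεB) (fun s => (hsum s).trans (le_add_of_nonneg_left hε.le)) hε.le hεB

end TailBounds

/-! ### Channels -/

section Channels

variable {S X Y : Type*} [Fintype X]

lemma outDist_outDist [Fintype S] (P : S → ℝ) (V : S → X → ℝ) (W : X → Y → ℝ) :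
    outDist (outDist P V) W = outDist P fun s => outDist (V s) W := by
  funext y
  simp only [outDist, sum_mul, mul_sum]
  rw [sum_comm]
  exact sum_congr rfl fun s _ => sum_congr rfl fun x _ => mul_assoc _ _ _

lemma sum_outDist_mul [Fintype Y] (P : X → ℝ) (W : X → Y → ℝ) (f : Y → ℝ) :
    ∑ y, outDist P W y * f y = ∑ x, P x * ∑ y, W x y * f y := by
  simp only [outDist, sum_mul, mul_sum, mul_assoc]
  exact sum_comm

lemma prob_outDist [Fintype Y] (P : X → ℝ) (W : X → Y → ℝ) (B : Set Y) :
    prob (outDist P W) B = ∑ x, P x * prob (W x) B := by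
  simpa only [prob, Set.indicator_apply, Pi.one_apply, mul_ite, mul_one, mul_zero] using
    sum_outDist_mul P W (B.indicator 1)

lemma outDist_iid_Wn (P : X → ℝ) (W : X → Y → ℝ) (n : ℕ) :
    outDist (iid P) (Wn W n) = iid (outDist P W) :=
  funext fun y => sum_productLaw_mul_prod (fun _ => P) fun i x => W x (y i)

lemma IsChannel.isPMF [Fintype Y] {W : S → Y → ℝ} (hW : IsChannel W) (s : S) : IsPMF (W s) :=
  ⟨hW.1 s, hW.2 s⟩

lemma isPMF_outDist [Fintype Y] {P : X → ℝ} (hP : IsPMF P) {W : X → Y → ℝ} (hW : IsChannel W) :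
    IsPMF (outDist P W) := by
  refine ⟨fun y => sum_nonneg fun x _ => mul_nonneg (hP.1 x) (hW.1 x y), ?_⟩
  rw [← prob_univ, prob_outDist]
  simp only [prob_univ, hW.2, mul_one, hP.2]

lemma isChannel_Wn [Fintype Y] {W : S → Y → ℝ} (hW : IsChannel W) (n : ℕ) :
    IsChannel (Wn W n) :=
  have h : ∀ x : Fin n → S, IsPMF (Wn W n x) := fun x =>
    isPMF_productLaw fun i => hW.isPMF (x i)
  ⟨fun x => (h x).1, fun x => (h x).2⟩

/-- The uniform distribution. -/
def uniform [Fintype S] (_ : S) : ℝ := (Fintype.card S : ℝ)⁻¹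

lemma isPMF_uniform [Fintype S] [Nonempty S] : IsPMF (uniform : S → ℝ) :=
  ⟨fun _ => by unfold uniform; positivity, by simp [uniform]⟩

/-- The uniform distribution on the entries of the list `u`, counted with multiplicity. -/
def empirical [Fintype S] (u : S → X) : X → ℝ := outDist uniform fun s => Pi.single (u s) 1

lemma isPMF_empirical [Fintype S] [Nonempty S] (u : S → X) : IsPMF (empirical u) :=
  isPMF_outDist isPMF_uniform
    ⟨fun s => (Pi.single_nonneg.2 zero_le_one : (0 : X → ℝ) ≤ Pi.single (u s) 1),
      fun _ => Fintype.sum_pi_single' _ _⟩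

lemma outDist_empirical [Fintype S] (u : S → X) (W : X → Y → ℝ) :
    outDist (empirical u) W = outDist uniform fun s => W (u s) := by
  rw [empirical, outDist_outDist]
  congr 1
  ext s y
  simp [outDist, Pi.single_apply]

lemma sum_empirical_mul [Fintype S] (u : S → X) (f : X → ℝ) :
    ∑ x, empirical u x * f x = (Fintype.card S : ℝ)⁻¹ * ∑ s, f (u s) := by
  simpa only [outDist, uniform, mul_sum] using
    congrFun (outDist_empirical u fun x (_ : Unit) => f x) ()

lemma outDist_iid_empirical [Fintype S] [DecidableEq S] [Nonempty S] {P : X → ℝ}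
    (hP : IsPMF P) : outDist (iid P) (fun u : S → X => empirical u) = P := by
  funext x
  have hcoord : ∀ s : S, ∑ u : S → X, iid P u * (Pi.single (u s) 1 : X → ℝ) x = P x := by
    intro s
    rw [← prob_singleton P x, ← prob_productLaw_coord (fun _ => hP) s {x}]
    refine sum_congr rfl fun u _ => ?_
    by_cases h : u s = x <;> simp [h]
  have hcard : (Fintype.card S : ℝ) ≠ 0 := Nat.cast_ne_zero.2 Fintype.card_ne_zero
  calc ∑ u : S → X, iid P u * ∑ s, uniform s * (Pi.single (u s) 1 : X → ℝ) x
      = ∑ s : S, (Fintype.card S : ℝ)⁻¹ * ∑ u : S → X, iid P u * (Pi.single (u s) 1 : X → ℝ) x := by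
        simp only [mul_sum]
        rw [sum_comm]
        exact sum_congr rfl fun s _ => sum_congr rfl fun u _ => mul_left_comm _ _ _
    _ = P x := by
        simp only [hcoord, sum_const, nsmul_eq_mul, card_univ]
        field_simp

lemma prob_iid_le_sum_empirical_le_exp [Fintype S] [DecidableEq S] [Nonempty S] {P : X → ℝ}
    (hP : IsPMF P) {f : X → ℝ} (h0 : ∀ x, 0 ≤ f x) (h1 : ∀ x, f x ≤ 1) {t : ℝ}
    (ht : 3 * ∑ x, P x * f x ≤ t) :
    prob (iid P) {u : S → X | t ≤ ∑ x, empirical u x * f x}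
      ≤ exp (-(Fintype.card S * t / 3)) := by
  have hcard : (0 : ℝ) < Fintype.card S := Nat.cast_pos.2 Fintype.card_pos
  have hmean : 3 * ∑ _ : S, ∑ x, P x * f x ≤ Fintype.card S * t := by
    rw [sum_const, nsmul_eq_mul, card_univ, mul_left_comm]
    exact mul_le_mul_of_nonneg_left ht hcard.le
  simpa only [mul_one, sum_empirical_mul, inv_mul_eq_div, le_div_iff₀' hcard] using
    prob_productLaw_le_sum_le_exp (fun _ => hP) one_pos (fun _ => h0) (fun _ => h1) hmean

end Channels

/-! ### Identification with finite alphabets -/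

section Identification

variable {X Y Z κ : Type*} [Fintype X] [Fintype Y] [Fintype Z]

/-- The decision regions `D` identify the index of each of the laws `Q` with error probabilities
of both kinds at most `l`. -/
structure Identifies (Q : κ → Y → ℝ) (D : κ → Set Y) (l : ℝ) : Prop where
  prob_compl_le (m : κ) : prob (Q m) (D m)ᶜ ≤ l
  prob_le_of_ne (m m' : κ) (h : m ≠ m') : prob (Q m) (D m') ≤ l

/-- The input laws `G` with the decision regions `D` form an identification code for the channel
`V`, with error probabilities at most `l`, whose average input law induces at the output of `W` a
law dominated by `q`, up to a factor three and an additive error `l`. -/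
structure IsOutputDominatedIDCode (V : X → Z → ℝ) (W : X → Y → ℝ) (q : Y → ℝ) {κ : Type*}
    [Fintype κ] (G : κ → X → ℝ) (D : κ → Set Z) (l : ℝ) : Prop where
  isPMF (m : κ) : IsPMF (G m)
  identifies : Identifies (fun m => outDist (G m) V) D l
  prob_average_le (B : Set Y) : prob (outDist (outDist uniform G) W) B ≤ 3 * prob q B + l

/-- The output symbols `y` whose information density `log (W x y / outDist P W y)` with the input
symbol `x` is at least `c`. -/
def densitySet (P : X → ℝ) (W : X → Y → ℝ) (c : ℝ) (x : X) : Set Y :=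
  {y | exp c * outDist P W y ≤ W x y}

lemma prob_densitySet_le (P : X → ℝ) {W : X → Y → ℝ} (hW : IsChannel W) (c : ℝ) (x : X) :
    prob (outDist P W) (densitySet P W c x) ≤ exp (-c) := by
  rw [Real.exp_neg, ← one_div, le_div_iff₀' (Real.exp_pos c), ← hW.2 x, prob, mul_sum]
  refine sum_le_sum fun y _ => ?_
  rw [← Set.indicator_const_mul]
  exact Set.indicator_le' (fun y hy => hy) (fun y _ => hW.1 x y) y

variable [Fintype κ] {P : X → ℝ} {c l β : ℝ}

lemma exists_identifying_codewords {W : X → Y → ℝ} (hP : IsPMF P) (hW : IsChannel W) (hl : 0 < l)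
    (hmiss : ∑ x, P x * prob (W x) (densitySet P W c x)ᶜ ≤ β * l) (hc : exp (-c) ≤ β * l)
    (hβ : (Fintype.card κ + (Fintype.card κ : ℝ) ^ 2) * β < 1) :
    ∃ (x : κ → X) (D : κ → Set Y), Identifies (fun m => W (x m)) D l := by
  have hmarkov : ∀ B : X → Set Y, ∑ x, P x * prob (W x) (B x) ≤ β * l →
      prob P {x | l ≤ prob (W x) (B x)} ≤ β := fun B hB =>
    (hP.prob_le_div (fun x => (hW.isPMF x).prob_nonneg _) hl).trans ((div_le_iff₀ hl).2 hB)
  have hconfuse : ∀ x', ∑ x, P x * prob (W x) (densitySet P W c x') ≤ β * l := fun x' => by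
    rw [← prob_outDist]
    exact (prob_densitySet_le P hW c x').trans hc
  obtain ⟨x, hx, hxx, -⟩ := hP.exists_iid_avoiding (κ := κ) (C := ∅) (hmarkov _ hmiss)
    (fun x' => hmarkov (fun _ => densitySet P W c x') (hconfuse x')) (prob_empty _).le
    (by rwa [add_zero])
  exact ⟨x, fun m => densitySet P W c (x m), fun m => (not_le.1 (hx m)).le,
    fun m m' h => (not_le.1 (hxx m m' h)).le⟩

variable {A : Type*} [Fintype A]

lemma prob_outDist_iUnion_densitySet_le {V : X → Z → ℝ} (hP : IsPMF P) (hV : IsChannel V) (c : ℝ)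
    (u : A → X) :
    prob (outDist P V) (⋃ a, densitySet P V c (u a)) ≤ Fintype.card A * exp (-c) :=
  calc _ ≤ ∑ a, prob (outDist P V) (densitySet P V c (u a)) :=
        (isPMF_outDist hP hV).prob_iUnion_le _
    _ ≤ ∑ _ : A, exp (-c) := sum_le_sum fun a _ => prob_densitySet_le P hV c (u a)
    _ = _ := by rw [sum_const, nsmul_eq_mul, card_univ]

lemma prob_outDist_empirical_compl_iUnion_le {V : X → Z → ℝ} (hV : IsChannel V) (T : X → Set Z)
    (u : A → X) :
    prob (outDist (empirical u) V) (⋃ a, T (u a))ᶜ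
      ≤ ∑ x, empirical u x * prob (V x) (T x)ᶜ := by
  rw [prob_outDist, sum_empirical_mul, sum_empirical_mul]
  refine mul_le_mul_of_nonneg_left (sum_le_sum fun a _ => ?_) (by positivity)
  exact (hV.isPMF _).prob_mono fun z hz _ hza => hz (Set.mem_iUnion_of_mem a hza)

lemma prob_iid_exists_le_outDist_empirical [DecidableEq κ] [Nonempty κ] {W : X → Y → ℝ}
    (hP : IsPMF P) (hW : IsChannel W) {t : ℝ} (ht : 0 ≤ t) :
    prob (iid P) {u : κ → X | ∃ y, 3 * outDist P W y + t ≤ outDist (empirical u) W y}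
      ≤ Fintype.card Y * exp (-(Fintype.card κ * t / 3)) := by
  have hy : ∀ y, prob (iid P) {u : κ → X | 3 * outDist P W y + t ≤ outDist (empirical u) W y}
      ≤ exp (-(Fintype.card κ * t / 3)) := fun y => by
    refine (prob_iid_le_sum_empirical_le_exp hP (fun x => hW.1 x y)
      (fun x => ?_) (le_add_of_nonneg_right ht)).trans ?_
    · exact (prob_singleton (W x) y).symm.trans_le ((hW.isPMF x).prob_le_one _)
    · gcongr
      exact le_add_of_nonneg_left (mul_nonneg zero_le_three ((isPMF_outDist hP hW).1 y))
  calc _ ≤ ∑ y, prob (iid P) {u : κ → X | 3 * outDist P W y + t ≤ outDist (empirical u) W y} := by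
        rw [Set.ofPred_exists]
        exact (isPMF_iid hP).prob_iUnion_le _
    _ ≤ ∑ _ : Y, exp (-(Fintype.card κ * t / 3)) := sum_le_sum fun y _ => hy y
    _ = _ := by rw [sum_const, nsmul_eq_mul, card_univ]

/-- The input laws are the empirical distributions of lists of independent `P`-distributed symbols,
indexed by `A`; each decision region is the union of the density sets along a list. -/
lemma exists_isOutputDominatedIDCode {V : X → Z → ℝ} {W : X → Y → ℝ} (hP : IsPMF P)
    (hV : IsChannel V) (hW : IsChannel W) (A : Type*) [Fintype A] [Nonempty A] [Nonempty κ]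
    (hl : 0 < l) (hmiss : 3 * ∑ x, P x * prob (V x) (densitySet P V c x)ᶜ ≤ l)
    (hconfuse : 3 * (Fintype.card A * exp (-c)) ≤ l)
    (hsel : (Fintype.card κ + (Fintype.card κ : ℝ) ^ 2) * exp (-(Fintype.card A * l / 3))
      + Fintype.card Y * exp (-(Fintype.card κ * (l / Fintype.card Y) / 3)) < 1) :
    ∃ (G : κ → X → ℝ) (D : κ → Set Z),
      IsOutputDominatedIDCode V W (outDist P W) G D l := by
  set T := densitySet P V c
  have hmean : outDist (iid P) (fun u : A → X => outDist (empirical u) W) = outDist P W := by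
    rw [← outDist_outDist, outDist_iid_empirical hP]
  have hWchan : IsChannel fun u : A → X => outDist (empirical u) W :=
    have h u := isPMF_outDist (isPMF_empirical u) hW
    ⟨fun u => (h u).1, fun u => (h u).2⟩
  have htail : ∀ B : X → Set Z, 3 * ∑ x, P x * prob (V x) (B x) ≤ l →
      prob (iid P) {u : A → X | l ≤ ∑ x, empirical u x * prob (V x) (B x)}
        ≤ exp (-(Fintype.card A * l / 3)) := fun B hB =>
    prob_iid_le_sum_empirical_le_exp hP (fun x => (hV.isPMF x).prob_nonneg _)
      (fun x => (hV.isPMF x).prob_le_one _) hB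
  have hfalse : ∀ u : A → X, 3 * ∑ x, P x * prob (V x) (⋃ a, T (u a)) ≤ l := fun u => by
    rw [← prob_outDist]
    linarith [prob_outDist_iUnion_densitySet_le hP hV c u]
  obtain ⟨u, hu, huu, hdom⟩ := (isPMF_iid hP).exists_iid_avoiding (htail _ hmiss)
    (fun v => htail (fun _ => ⋃ a, T (v a)) (hfalse v))
    (prob_iid_exists_le_outDist_empirical (κ := κ) (isPMF_iid hP) hWchan
      (div_nonneg hl.le (Nat.cast_nonneg _))) hsel
  have haverage : outDist (empirical u) (fun v => outDist (empirical v) W)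
      = outDist (outDist uniform fun m => empirical (u m)) W := by
    rw [outDist_outDist]
    exact outDist_empirical u _
  simp only [hmean, haverage, Set.mem_ofPred_eq, not_exists, not_le] at hdom
  refine ⟨fun m => empirical (u m), fun m => ⋃ a, T (u m a), fun m => isPMF_empirical _,
    ⟨fun m => ?_, fun m m' h => ?_⟩, fun B => ?_⟩
  · exact (prob_outDist_empirical_compl_iUnion_le hV T (u m)).trans (not_le.1 (hu m)).le
  · rw [prob_outDist]
    exact (not_le.1 (huu m m' h)).le
  · exact prob_le_mul_prob_add hl.le (fun y => (hdom y).le) B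

end Identification

/-! ### Hashing -/

section Hashing

variable {Ω σ κ : Type*} [Fintype Ω] [Fintype σ] [Fintype κ] {q : Ω → ℝ} {δ l : ℝ}

lemma prob_iid_uniform_agree_le (hq : IsPMF q) (hδ : 0 < δ) (hσ : 6 / l ≤ Fintype.card σ)
    (hl : 0 < l) (v : Ω → σ) :
    prob (iid uniform) {u : Ω → σ | l / 2 ≤ prob q ({ω | u ω = v ω} ∩ {ω | q ω ≤ δ})}
      ≤ exp (-(l / (6 * δ))) := by
  have hcard : (0 : ℝ) < Fintype.card σ := (by positivity : (0 : ℝ) < 6 / l).trans_le hσ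
  have : Nonempty σ := Fintype.card_pos_iff.1 (Nat.cast_pos.1 hcard)
  set f : Ω → σ → ℝ := fun ω s => {t | t = v ω ∧ q ω ≤ δ}.indicator (fun _ => q ω) s
  have hmean : 3 * ∑ ω, ∑ s, uniform s * f ω s ≤ l / 2 :=
    calc 3 * ∑ ω, ∑ s, uniform s * f ω s ≤ 3 * ∑ ω, (Fintype.card σ : ℝ)⁻¹ * q ω := by
          gcongr with ω
          simp only [uniform, ← mul_sum]
          gcongr
          calc ∑ s, f ω s ≤ ∑ s, ({v ω} : Set σ).indicator (fun _ => q ω) s :=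
                sum_le_sum fun s _ => Set.indicator_le_indicator_of_subset
                  (fun t ht => ht.1) (fun _ => hq.1 ω) s
            _ = q ω := by simp [Set.indicator_apply]
      _ = 3 / Fintype.card σ := by rw [← mul_sum, hq.2, mul_one, div_eq_mul_inv]
      _ ≤ l / 2 := by
          rw [div_le_iff₀ hl] at hσ
          rw [div_le_div_iff₀ hcard two_pos]
          linarith
  have htail := prob_productLaw_le_sum_le_exp (fun _ : Ω => isPMF_uniform) hδ
    (fun ω s => Set.indicator_nonneg (fun _ _ => hq.1 ω) s)
    (fun ω s => Set.indicator_le' (fun t ht => ht.2) (fun _ _ => hδ.le) s) hmean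
  rw [div_div, ← mul_assoc, show (2 : ℝ) * 3 = 6 by norm_num] at htail
  refine le_trans (le_of_eq ?_) htail
  simp only [prob, Set.indicator_apply, Set.mem_inter_iff, Set.mem_ofPred_eq]

lemma exists_hashing (hq : IsPMF q) (hδ : 0 < δ) (hl : 0 < l) (hqδ : prob q {ω | δ < q ω} ≤ l / 2)
    (hσ : 6 / l ≤ Fintype.card σ)
    (hκ : (Fintype.card κ + (Fintype.card κ : ℝ) ^ 2) * exp (-(l / (6 * δ))) < 1) :
    ∃ f : κ → Ω → σ, Pairwise fun m m' => prob q {ω | f m ω = f m' ω} ≤ l := by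
  have hcard : (0 : ℝ) < Fintype.card σ := (by positivity : (0 : ℝ) < 6 / l).trans_le hσ
  have : Nonempty σ := Fintype.card_pos_iff.1 (Nat.cast_pos.1 hcard)
  obtain ⟨f, -, hf, -⟩ := (isPMF_iid (ι := Ω) (isPMF_uniform (S := σ))).exists_iid_avoiding
    (κ := κ) (A := ∅) (C := ∅) ((prob_empty _).trans_le (Real.exp_pos _).le)
    (prob_iid_uniform_agree_le hq hδ hσ hl) (prob_empty _).le (by rwa [add_zero])
  refine ⟨f, fun m m' h => ?_⟩
  calc prob q {ω | f m ω = f m' ω}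
      ≤ prob q ({ω | f m ω = f m' ω} ∩ {ω | q ω ≤ δ} ∪ {ω | δ < q ω}) :=
        hq.prob_mono fun ω hω _ => (le_or_gt (q ω) δ).imp (And.intro hω) id
    _ ≤ l / 2 + l / 2 := (hq.prob_union_le _ _).trans
        (add_le_add (not_le.1 (hf m m' h)).le hqδ)
    _ = l := add_halves l

end Hashing

/-! ### Asymptotic equipartition -/

section AsymptoticEquipartition

variable {X Y : Type*} [Fintype X] [Fintype Y]

/-- The joint law of the input and the output of the channel `W` under the input law `P`. -/
def jointLaw (P : X → ℝ) (W : X → Y → ℝ) (s : X × Y) : ℝ := P s.1 * W s.1 s.2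

lemma prob_jointLaw (P : X → ℝ) (W : X → Y → ℝ) (B : X → Set Y) :
    prob (jointLaw P W) {s | s.2 ∈ B s.1} = ∑ x, P x * prob (W x) (B x) := by
  simp only [prob, Fintype.sum_prod_type, mul_sum]
  refine sum_congr rfl fun x _ => sum_congr rfl fun y _ => ?_
  by_cases h : y ∈ B x <;> simp [h, jointLaw]

lemma sum_iid_mul_prob_Wn (P : X → ℝ) (W : X → Y → ℝ) {n : ℕ}
    (B : (Fin n → X) → Set (Fin n → Y)) :
    ∑ x, iid P x * prob (Wn W n x) (B x)
      = prob (iid (jointLaw P W)) {ω | (fun i => (ω i).2) ∈ B fun i => (ω i).1} := by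
  rw [← prob_jointLaw, prob, prob,
    ← (Equiv.arrowProdEquivProdArrow (Fin n) (fun _ => X) fun _ => Y).sum_comp]
  refine sum_congr rfl fun ω _ => ?_
  simp only [Set.indicator_apply, Set.mem_ofPred_eq, jointLaw, productLaw, Wn, prod_mul_distrib,
    Equiv.arrowProdEquivProdArrow_apply]

variable {P : X → ℝ} {W : X → Y → ℝ}

lemma isPMF_jointLaw (hP : IsPMF P) (hW : IsChannel W) : IsPMF (jointLaw P W) := by
  refine ⟨fun s => mul_nonneg (hP.1 _) (hW.1 _ _), ?_⟩
  rw [← prob_univ]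
  simpa [prob_univ, hW.2, hP.2] using prob_jointLaw P W fun _ => Set.univ

/-- The information density `log (W(y|x) / PW(y))`. -/
def infoDensity (P : X → ℝ) (W : X → Y → ℝ) (s : X × Y) : ℝ := log (W s.1 s.2 / outDist P W s.2)

lemma sum_jointLaw_mul_infoDensity (P : X → ℝ) (W : X → Y → ℝ) :
    ∑ s, jointLaw P W s * infoDensity P W s = mutInf P W := by
  rw [mutInf, Fintype.sum_prod_type]
  refine sum_congr rfl fun x _ => sum_congr rfl fun y _ => ?_
  split_ifs with h
  · rw [jointLaw, h, zero_mul]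
  · rfl

lemma exp_infoDensity_mul_outDist (hP : IsPMF P) (hW : IsChannel W) {s : X × Y}
    (hs : jointLaw P W s ≠ 0) : exp (infoDensity P W s) * outDist P W s.2 = W s.1 s.2 := by
  have hpos : 0 < jointLaw P W s := ((isPMF_jointLaw hP hW).1 s).lt_of_ne' hs
  have hWpos : 0 < W s.1 s.2 := (hW.1 _ _).lt_of_ne' (right_ne_zero_of_mul hs)
  have hout : 0 < outDist P W s.2 := hpos.trans_le <|
    single_le_sum (f := fun x => P x * W x s.2) (fun x _ => mul_nonneg (hP.1 x) (hW.1 x _))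
      (mem_univ s.1)
  rw [infoDensity, Real.exp_log (div_pos hWpos hout), div_mul_cancel₀ _ hout.ne']

lemma tendsto_miss_densitySet (hP : IsPMF P) (hW : IsChannel W) {ε : ℝ} (hε : 0 < ε) :
    Tendsto (fun n : ℕ => ∑ x, iid P x * prob (Wn W n x)
      (densitySet (iid P) (Wn W n) (n * (mutInf P W - ε)) x)ᶜ) atTop (𝓝 0) := by
  have hjoint := isPMF_jointLaw hP hW
  have hlaw := tendsto_prob_iid_sum_le hjoint (infoDensity P W) hε
  rw [sum_jointLaw_mul_infoDensity] at hlaw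
  refine squeeze_zero (fun n => sum_nonneg fun x _ => mul_nonneg ((isPMF_iid hP).1 x)
    (((isChannel_Wn hW n).isPMF x).prob_nonneg _)) (fun n => ?_) hlaw
  rw [sum_iid_mul_prob_Wn]
  refine (isPMF_iid hjoint).prob_mono fun ω hω hpos => ?_
  by_contra hlarge
  have hfactor : ∀ i, jointLaw P W (ω i) ≠ 0 := fun i => prod_ne_zero_iff.1 hpos i (mem_univ i)
  have hWn : exp (∑ i, infoDensity P W (ω i)) * iid (outDist P W) (fun i => (ω i).2)
      = Wn W n (fun i => (ω i).1) fun i => (ω i).2 := by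
    rw [Real.exp_sum, iid, productLaw, ← prod_mul_distrib]
    exact prod_congr rfl fun i _ => exp_infoDensity_mul_outDist hP hW (hfactor i)
  refine hω ?_
  simp only [densitySet, Set.mem_ofPred_eq, outDist_iid_Wn, ← hWn, not_le] at hlarge ⊢
  exact mul_le_mul_of_nonneg_right (Real.exp_le_exp.2 hlarge.le)
    ((isPMF_iid (isPMF_outDist hP hW)).1 _)

lemma sum_mul_neg_log (q : Y → ℝ) : ∑ y, q y * -log (q y) = entH q := by
  refine sum_congr rfl fun y _ => ?_
  split_ifs with h
  · rw [h, zero_mul]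
  · rw [mul_neg]

lemma tendsto_prob_iid_exp_neg_lt {q : Y → ℝ} (hq : IsPMF q) {ε : ℝ} (hε : 0 < ε) :
    Tendsto (fun n : ℕ => prob (iid q) {y : Fin n → Y | exp (-(n * (entH q - ε))) < iid q y})
      atTop (𝓝 0) := by
  have hlaw := tendsto_prob_iid_sum_le hq (fun y => -log (q y)) hε
  rw [sum_mul_neg_log] at hlaw
  refine squeeze_zero (fun n => (isPMF_iid hq).prob_nonneg _)
    (fun n => (isPMF_iid hq).prob_mono fun y hy hpos => ?_) hlaw
  have hlog := Real.log_lt_log (Real.exp_pos _) hy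
  rw [Real.log_exp, iid, productLaw, Real.log_prod fun i hi => prod_ne_zero_iff.1 hpos i hi] at hlog
  rw [Set.mem_ofPred_eq, sum_neg_distrib]
  linarith

end AsymptoticEquipartition

/-! ### Doubly exponential message sets -/

section DoublyExponential

/-- The size `⌈exp (exp (n R))⌉` of a message set of doubly exponential rate `R`. -/
def idSize (R : ℝ) (n : ℕ) : ℕ := ⌈exp (exp (n * R))⌉₊

lemma exp_exp_le_idSize (R : ℝ) (n : ℕ) : exp (exp (n * R)) ≤ idSize R n := Nat.le_ceil _

lemma idSize_pos (R : ℝ) (n : ℕ) : 0 < idSize R n := Nat.ceil_pos.2 (Real.exp_pos _)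

instance (R : ℝ) (n : ℕ) : NeZero (idSize R n) := ⟨(idSize_pos R n).ne'⟩

lemma natCeil_exp_le {x : ℝ} (hx : 0 ≤ x) : (⌈exp x⌉₊ : ℝ) ≤ 2 * exp x := by
  linarith [Nat.ceil_lt_add_one (Real.exp_pos x).le, Real.one_le_exp hx]

lemma tendsto_exp_natCast_mul {a : ℝ} (ha : 0 < a) :
    Tendsto (fun n : ℕ => exp (n * a)) atTop atTop :=
  Real.tendsto_exp_atTop.comp (tendsto_natCast_atTop_atTop.atTop_mul_const ha)

lemma tendsto_exp_neg_natCast_mul {a : ℝ} (ha : 0 < a) :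
    Tendsto (fun n : ℕ => exp (-(n * a))) atTop (𝓝 0) :=
  Real.tendsto_exp_neg_atTop_nhds_zero.comp (tendsto_natCast_atTop_atTop.atTop_mul_const ha)

lemma idSize_add_sq_le (R : ℝ) (n : ℕ) :
    (idSize R n + (idSize R n : ℝ) ^ 2) ≤ 8 * exp (2 * exp (n * R)) := by
  have hone : (1 : ℝ) ≤ idSize R n := Nat.one_le_cast.2 (idSize_pos R n)
  have hle : (idSize R n : ℝ) ≤ 2 * exp (exp (n * R)) := natCeil_exp_le (Real.exp_pos _).le
  have hsq : exp (2 * exp (n * R)) = exp (exp (n * R)) ^ 2 := by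
    rw [← Real.exp_nat_mul, Nat.cast_ofNat]
  nlinarith

lemma tendsto_idSize_add_sq_mul_exp_neg {R R' c : ℝ} (hR : 0 ≤ R) (hRR' : R < R') (hc : 0 < c) :
    Tendsto (fun n : ℕ => (idSize R n + (idSize R n : ℝ) ^ 2) * exp (-(c * exp (n * R'))))
      atTop (𝓝 0) := by
  have hgap : Tendsto (fun n : ℕ => c * exp (n * (R' - R)) - 2) atTop atTop :=
    tendsto_atTop_add_const_right _ _ <|
      (tendsto_exp_natCast_mul (sub_pos.2 hRR')).const_mul_atTop hc
  have hexponent : Tendsto (fun n : ℕ => exp (n * R) * (c * exp (n * (R' - R)) - 2))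
      atTop atTop := by
    refine tendsto_atTop_mono' _ ?_ hgap
    filter_upwards [hgap.eventually_ge_atTop 0] with n hn
    exact le_mul_of_one_le_left hn (Real.one_le_exp (by positivity))
  refine squeeze_zero (fun n => by positivity) (fun n => ?_)
    (mul_zero (8 : ℝ) ▸ (Real.tendsto_exp_neg_atTop_nhds_zero.comp hexponent).const_mul 8)
  calc _ ≤ 8 * exp (2 * exp (n * R)) * exp (-(c * exp (n * R'))) := by
        gcongr
        exact idSize_add_sq_le R n
    _ = 8 * exp (-(exp (n * R) * (c * exp (n * (R' - R)) - 2))) := by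
        rw [mul_assoc, ← Real.exp_add, mul_sub _ R' R, Real.exp_sub]
        field_simp
        ring_nf

lemma tendsto_pow_mul_exp_neg_idSize {R c K : ℝ} (hR : 0 < R) (hc : 0 < c) (hK : 0 < K) :
    Tendsto (fun n : ℕ => K ^ n * exp (-(idSize R n * (c / K ^ n)))) atTop (𝓝 0) := by
  have hexponent : Tendsto (fun n : ℕ => exp (n * R) - n * (2 * log K)) atTop atTop := by
    have hlin : Tendsto (fun n : ℕ => (n : ℝ) * (n * (R ^ 2 / 2) - 2 * log K)) atTop atTop :=
      tendsto_natCast_atTop_atTop.atTop_mul_atTop₀ <| tendsto_atTop_add_const_right _ _ <|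
        tendsto_natCast_atTop_atTop.atTop_mul_const (by positivity)
    refine tendsto_atTop_mono (fun n => ?_) hlin
    have hnR : 0 ≤ n * R := by positivity
    linarith [Real.quadratic_le_exp_of_nonneg hnR]
  refine squeeze_zero (fun n => by positivity) (fun n => ?_)
    (mul_zero c⁻¹ ▸ (Real.tendsto_exp_neg_atTop_nhds_zero.comp hexponent).const_mul c⁻¹)
  have hKn : exp (n * (2 * log K)) = K ^ n * K ^ n := by
    rw [Real.exp_nat_mul, two_mul, Real.exp_add, Real.exp_log hK, mul_pow]
  have hM := exp_exp_le_idSize R n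
  calc K ^ n * exp (-(idSize R n * (c / K ^ n)))
      ≤ K ^ n * (exp (exp (n * R)) * (c / K ^ n))⁻¹ := by
        rw [Real.exp_neg]
        gcongr
        exact (mul_le_mul_of_nonneg_right hM (by positivity)).trans
          ((le_add_of_nonneg_right zero_le_one).trans (Real.add_one_le_exp _))
    _ = c⁻¹ * exp (-(exp (n * R) - n * (2 * log K))) := by
        rw [neg_sub, Real.exp_sub, hKn]
        field_simp

lemma mul_le_log_log_idSize (R : ℝ) (n : ℕ) : n * R ≤ log (log (idSize R n)) := by
  have hlog : exp (n * R) ≤ log (idSize R n) :=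
    (Real.le_log_iff_exp_le (Nat.cast_pos.2 (idSize_pos R n))).2 (exp_exp_le_idSize R n)
  exact (Real.le_log_iff_exp_le ((Real.exp_pos _).trans_le hlog)).2 hlog

end DoublyExponential

/-! ### Identification over long blocks -/

section LongBlocks

variable {X Y Z : Type*} [Fintype X] [Fintype Y] [Fintype Z] {l : ℝ}

lemma exists_block_code_of_mutInf_pos {P : X → ℝ} {W : X → Y → ℝ} (hP : IsPMF P)
    (hW : IsChannel W) (hI : 0 < mutInf P W) (κ : Type*) [Finite κ] (hl : 0 < l) :
    ∃ (n : ℕ) (c : κ → Fin n → X) (D : κ → Set (Fin n → Y)),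
      Identifies (fun m => Wn W n (c m)) D l := by
  have := Fintype.ofFinite κ
  obtain ⟨K, hK, hKpos⟩ : ∃ K : ℝ, K = Fintype.card κ + (Fintype.card κ : ℝ) ^ 2 ∧ 0 < K + 1 :=
    ⟨_, rfl, by positivity⟩
  have hβ : K * (K + 1)⁻¹ < 1 := by
    rw [← div_eq_mul_inv, div_lt_one hKpos]
    exact lt_add_one K
  have hsmall : 0 < (K + 1)⁻¹ * l := by positivity
  obtain ⟨n, hmiss, hconfuse⟩ :=
    (((tendsto_miss_densitySet hP hW (half_pos hI)).eventually_le_const hsmall).and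
      ((tendsto_exp_neg_natCast_mul (sub_pos.2 (half_lt_self hI))).eventually_le_const
        hsmall)).exists
  exact ⟨n, exists_identifying_codewords (isPMF_iid hP) (isChannel_Wn hW n) hl hmiss hconfuse
    (hK ▸ hβ)⟩

lemma eventually_exists_hashing {q : Y → ℝ} (hq : IsPMF q) {R : ℝ} (hR : 0 ≤ R)
    (hRH : R < entH q) {σ : Type*} [Fintype σ] (hl : 0 < l) (hσ : 6 / l ≤ Fintype.card σ) :
    ∀ᶠ n : ℕ in atTop, ∃ f : Fin (idSize R n) → (Fin n → Y) → σ,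
      Pairwise fun m m' => prob (iid q) {y | f m y = f m' y} ≤ l := by
  set ε := (entH q - R) / 2 with hε
  have hεpos : 0 < ε := half_pos (sub_pos.2 hRH)
  have hRε : R < entH q - ε := by linarith
  filter_upwards [(tendsto_prob_iid_exp_neg_lt hq hεpos).eventually_le_const (half_pos hl),
    (tendsto_idSize_add_sq_mul_exp_neg hR hRε
      (div_pos hl (by norm_num : (0 : ℝ) < 6))).eventually_lt_const one_pos] with n hatypical hsel
  refine exists_hashing (isPMF_iid hq) (Real.exp_pos _) hl hatypical hσ ?_
  rwa [Fintype.card_fin, Real.exp_neg (n * _), ← div_div, div_inv_eq_mul]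

lemma eventually_exists_isOutputDominatedIDCode {P : X → ℝ} {V : X → Z → ℝ} {W : X → Y → ℝ}
    (hP : IsPMF P) (hV : IsChannel V) (hW : IsChannel W) {R : ℝ} (hR : 0 < R)
    (hRI : R < mutInf P V) (hl : 0 < l) :
    ∀ᶠ n : ℕ in atTop, ∃ (G : Fin (idSize R n) → (Fin n → X) → ℝ)
      (D : Fin (idSize R n) → Set (Fin n → Z)),
      IsOutputDominatedIDCode (Wn V n) (Wn W n) (iid (outDist P W)) G D l := by
  have : Nonempty Y := (isPMF_outDist hP hW).nonempty
  have hY : (0 : ℝ) < Fintype.card Y := Nat.cast_pos.2 Fintype.card_pos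
  set ε := (mutInf P V - R) / 4 with hε
  have hεpos : 0 < ε := by linarith
  have hRε : R < mutInf P V - 2 * ε := by linarith
  have hsel := (tendsto_idSize_add_sq_mul_exp_neg hR.le hRε (div_pos hl three_pos)).add
    (tendsto_pow_mul_exp_neg_idSize hR (div_pos hl three_pos) hY)
  rw [add_zero] at hsel
  filter_upwards [(tendsto_miss_densitySet hP hV hεpos).eventually_le_const (div_pos hl three_pos),
    (tendsto_exp_neg_natCast_mul hεpos).eventually_le_const (by positivity : 0 < l / 6),
    hsel.eventually_lt_const one_pos] with n hmiss hconfuse hsel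
  set c := n * (mutInf P V - ε) with hc
  set A := ⌈exp (n * (mutInf P V - 2 * ε))⌉₊
  have hA : exp (n * (mutInf P V - 2 * ε)) ≤ A := Nat.le_ceil _
  have : NeZero A := ⟨(Nat.ceil_pos.2 (Real.exp_pos _)).ne'⟩
  have hAc : A * exp (-c) ≤ 2 * exp (-(n * ε)) :=
    calc A * exp (-c) ≤ 2 * exp (n * (mutInf P V - 2 * ε)) * exp (-c) := by
          gcongr
          exact natCeil_exp_le (mul_nonneg n.cast_nonneg (hR.trans hRε).le)
      _ = 2 * exp (-(n * ε)) := by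
          rw [mul_assoc, ← Real.exp_add, hc]
          ring_nf
  simp only [← outDist_iid_Wn]
  refine exists_isOutputDominatedIDCode (c := c) (isPMF_iid hP) (isChannel_Wn hV n)
    (isChannel_Wn hW n) (Fin A) hl (by linarith) (by rw [Fintype.card_fin]; linarith)
    (lt_of_le_of_lt ?_ hsel)
  rw [Fintype.card_fin, Fintype.card_fin, Fintype.card_fun, Fintype.card_fin, Nat.cast_pow,
    div_right_comm l, mul_div_assoc, mul_div_assoc, mul_comm (A : ℝ)]
  gcongr

end LongBlocks

/-! ### Feedback encoders -/

section ConditionalLaws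

variable {S T : Type*} [Fintype S] [Fintype T] {p : S → ℝ}

/-- The conditional law of `φ` given the event `B` under `p`; uniform if `B` has probability zero,
so that it always is a probability mass function. -/
def condLaw (p : S → ℝ) (B : Set S) (φ : S → T) (t : T) : ℝ :=
  if prob p B = 0 then uniform t else prob p (B ∩ φ ⁻¹' {t}) / prob p B

lemma isPMF_condLaw [Nonempty T] (hp : IsPMF p) (B : Set S) (φ : S → T) :
    IsPMF (condLaw p B φ) := by
  unfold condLaw
  split_ifs with h
  · exact isPMF_uniform
  · refine ⟨fun t => div_nonneg (hp.prob_nonneg _) (hp.prob_nonneg _), ?_⟩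
    rw [← sum_div, ← prob_eq_sum_prob_inter_fiber, div_self h]

lemma prob_mul_condLaw (hp : IsPMF p) (B : Set S) (φ : S → T) (t : T) :
    prob p B * condLaw p B φ t = prob p (B ∩ φ ⁻¹' {t}) := by
  rw [condLaw]
  split_ifs with h
  · rw [h, zero_mul]
    exact le_antisymm (hp.prob_nonneg _) (h ▸ hp.prob_mono fun s hs _ => hs.1)
  · exact mul_div_cancel₀ _ h

lemma prod_condLaw (hp : IsPMF p) {n : ℕ} (φ : Fin n → S → T) (t : Fin n → T) :
    ∏ i, condLaw p {s | ∀ j < i, φ j s = t j} (φ i) (t i) = prob p {s | ∀ j, φ j s = t j} := by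
  induction n with
  | zero => simp [prob, hp.2]
  | succ n ih =>
    have hpast (i : Fin n) : {s | ∀ j < i.castSucc, φ j s = t j}
        = {s | ∀ j < i, φ j.castSucc s = t j.castSucc} := by
      simp [Fin.forall_fin_succ', Fin.castSucc_lt_castSucc_iff, Fin.le_last]
    have hlast : {s | ∀ j < Fin.last n, φ j s = t j}
        = {s | ∀ j : Fin n, φ j.castSucc s = t j.castSucc} := by
      simp [Fin.forall_fin_succ', Fin.castSucc_lt_last]
    simp only [Fin.prod_univ_castSucc, hpast, hlast]
    rw [ih (fun j => φ j.castSucc) fun j => t j.castSucc, prob_mul_condLaw hp]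
    simp only [Fin.forall_fin_succ']
    rfl

end ConditionalLaws

section FeedbackEncoder

variable {X Y Z S : Type*} {n k : ℕ}

/-- The encoder which first sends a random word with law `G`, letter by letter, and then the word
`c y`, where `y` is the feedback received during the first word. -/
def feedbackEncoder [Fintype X] (G : (Fin n → X) → ℝ) (c : (Fin n → Y) → Fin k → X) (i : ℕ)
    (xs : Fin i → X) (ys : Fin i → Y) : X → ℝ :=
  if hi : i < n then
    condLaw G {x | ∀ (j : Fin n) (hj : j.1 < i), x j = xs ⟨j, hj⟩} fun x => x ⟨i, hi⟩
  else if hik : i < n + k then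
    Pi.single (c (fun j => ys ⟨j, j.2.trans_le (not_lt.1 hi)⟩)
      ⟨i - n, Nat.sub_lt_left_of_lt_add (not_lt.1 hi) hik⟩) 1
  else 0

/-- The `n`-fold memoryless extension of a broadcast channel. -/
def bcWn (W : X → Y → Z → ℝ) (n : ℕ) (x : Fin n → X) (y : Fin n → Y) (z : Fin n → Z) : ℝ :=
  ∏ i, W (x i) (y i) (z i)

lemma margY_bcWn [Fintype Z] (W : X → Y → Z → ℝ) (n : ℕ) : margY (bcWn W n) = Wn (margY W) n :=
  funext₂ fun x y => (Fintype.prod_sum fun i z => W (x i) (y i) z).symm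

lemma margZ_bcWn [Fintype Y] (W : X → Y → Z → ℝ) (n : ℕ) : margZ (bcWn W n) = Wn (margZ W) n :=
  funext₂ fun x z => (Fintype.prod_sum fun i y => W (x i) y (z i)).symm

lemma sum_eq_sum_append [Fintype S] (F : (Fin (n + k) → S) → ℝ) :
    ∑ s, F s = ∑ s, ∑ s', F (Fin.append s s') := by
  rw [← Fintype.sum_prod_type', ← (Fin.appendEquiv n k).sum_comp]
  rfl

lemma isChannel_margY [Fintype Y] [Fintype Z] {W : X → Y → Z → ℝ} (hW : IsBC W) :
    IsChannel (margY W) :=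
  ⟨fun x y => sum_nonneg fun z _ => hW.1 x y z, hW.2⟩

lemma isChannel_margZ [Fintype Y] [Fintype Z] {W : X → Y → Z → ℝ} (hW : IsBC W) :
    IsChannel (margZ W) :=
  ⟨fun x z => sum_nonneg fun y _ => hW.1 x y z, fun x => sum_comm.trans (hW.2 x)⟩

variable [Fintype X] {G : (Fin n → X) → ℝ}

lemma isFBEncoder_feedbackEncoder (hG : IsPMF G) (c : (Fin n → Y) → Fin k → X) :
    IsFBEncoder (n + k) (feedbackEncoder G c) := by
  intro i hik xs ys
  by_cases hi : i < n
  · have : Nonempty X := hG.nonempty.map fun x => x ⟨i, hi⟩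
    simpa only [feedbackEncoder, hi, dite_true] using isPMF_condLaw hG _ _
  · simp only [feedbackEncoder, hi, hik, dite_true, dite_false]
    exact ⟨(Pi.single_nonneg.2 zero_le_one : (0 : X → ℝ) ≤ Pi.single _ 1),
      Fintype.sum_pi_single' _ _⟩

lemma prod_feedbackEncoder_append (hG : IsPMF G) (c : (Fin n → Y) → Fin k → X) (x : Fin n → X)
    (x' : Fin k → X) (y : Fin n → Y) (y' : Fin k → Y) :
    ∏ i : Fin (n + k), feedbackEncoder G c i (fun j : Fin i => Fin.append x x' ⟨j, j.2.trans i.2⟩)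
      (fun j : Fin i => Fin.append y y' ⟨j, j.2.trans i.2⟩) (Fin.append x x' i)
      = G x * (Pi.single (c y) 1 : (Fin k → X) → ℝ) x' := by
  rw [Fin.prod_univ_add]
  congr 1
  · have hletter (i : Fin n) : feedbackEncoder G c (Fin.castAdd k i)
        (fun j => Fin.append x x' ⟨j, j.2.trans (Fin.castAdd k i).2⟩)
        (fun j => Fin.append y y' ⟨j, j.2.trans (Fin.castAdd k i).2⟩)
          = condLaw G {w | ∀ j < i, w j = x j} fun w => w i := by
      have hx (j : Fin n) : Fin.append x x' ⟨j, j.2.trans_le (n.le_add_right k)⟩ = x j :=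
        Fin.append_left x x' j
      simp only [feedbackEncoder, Fin.val_castAdd, Fin.isLt, dite_true, hx]
      rfl
    have hword : {w | ∀ j, w j = x j} = {x} := Set.ext fun w => funext_iff.symm
    simp only [hletter, Fin.append_left]
    rw [prod_condLaw hG (fun j w => w j) x, hword, prob_singleton]
  · have hletter (i : Fin k) : feedbackEncoder G c (Fin.natAdd n i)
        (fun j => Fin.append x x' ⟨j, j.2.trans (Fin.natAdd n i).2⟩)
        (fun j => Fin.append y y' ⟨j, j.2.trans (Fin.natAdd n i).2⟩) = Pi.single (c y i) 1 := by
      have hy : (fun j : Fin n => Fin.append y y' ⟨j, j.2.trans_le (n.le_add_right k)⟩) = y :=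
        funext fun j => Fin.append_left y y' j
      have hi : (⟨n + i - n, by omega⟩ : Fin k) = i := Fin.ext (Nat.add_sub_cancel_left ..)
      simp only [feedbackEncoder, Fin.val_natAdd, (n.le_add_right _).not_gt, Fin.isLt,
        add_lt_add_iff_left, dite_true, dite_false, hy, hi]
    simp only [hletter, Fin.append_right, Pi.single_apply, prod_ite_zero, prod_const_one,
      funext_iff, mem_univ, true_imp_iff]

lemma fbLaw_feedbackEncoder_append (hG : IsPMF G) (c : (Fin n → Y) → Fin k → X)
    (W : X → Y → Z → ℝ) (x : Fin n → X) (x' : Fin k → X) (y : Fin n → Y) (y' : Fin k → Y)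
    (z : Fin n → Z) (z' : Fin k → Z) :
    fbLaw (n + k) W (feedbackEncoder G c) (Fin.append x x') (Fin.append y y') (Fin.append z z')
      = G x * (Pi.single (c y) 1 : (Fin k → X) → ℝ) x' * (bcWn W n x y z * bcWn W k x' y' z') := by
  rw [fbLaw, prod_mul_distrib, prod_feedbackEncoder_append hG, Fin.prod_univ_add]
  simp only [Fin.append_left, Fin.append_right, bcWn]

lemma sum_fbLaw_feedbackEncoder_append_left [Fintype Z] (hG : IsPMF G)
    (c : (Fin n → Y) → Fin k → X) (W : X → Y → Z → ℝ) (y : Fin n → Y) (y' : Fin k → Y) :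
    ∑ x, ∑ z, fbLaw (n + k) W (feedbackEncoder G c) x (Fin.append y y') z
      = outDist G (Wn (margY W) n) y * Wn (margY W) k (c y) y' := by
  simp only [sum_eq_sum_append, fbLaw_feedbackEncoder_append hG, ← mul_sum, ← sum_mul]
  simp only [← margY_bcWn, outDist, margY, Pi.single_apply, ite_mul, mul_ite, mul_one, mul_zero,
    zero_mul, sum_ite_eq', mem_univ, if_true, sum_mul, mul_assoc]

lemma sum_fbLaw_feedbackEncoder_append_right [Fintype Y] [Fintype Z] (hG : IsPMF G)
    (c : (Fin n → Y) → Fin k → X) {W : X → Y → Z → ℝ} (hW : IsBC W) (z : Fin n → Z) :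
    ∑ z', ∑ x, ∑ y, fbLaw (n + k) W (feedbackEncoder G c) x y (Fin.append z z')
      = outDist G (Wn (margZ W) n) z := by
  have htail (x' : Fin k → X) : ∑ y', ∑ z', bcWn W k x' y' z' = 1 := by
    rw [← (isChannel_Wn (isChannel_margY hW) k).2 x', ← margY_bcWn]
    rfl
  calc ∑ z', ∑ x, ∑ y, fbLaw (n + k) W (feedbackEncoder G c) x y (Fin.append z z')
      = ∑ x, ∑ y, ∑ z', fbLaw (n + k) W (feedbackEncoder G c) x y (Fin.append z z') :=
        sum_comm.trans (sum_congr rfl fun x _ => sum_comm)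
    _ = ∑ x, ∑ x', ∑ y, G x * (Pi.single (c y) 1 : (Fin k → X) → ℝ) x' * bcWn W n x y z := by
        simp only [sum_eq_sum_append, fbLaw_feedbackEncoder_append hG, ← mul_sum, htail, mul_one]
    _ = ∑ x, ∑ y, G x * bcWn W n x y z := by
        refine sum_congr rfl fun x _ => sum_comm.trans (sum_congr rfl fun y _ => ?_)
        rw [← sum_mul, ← mul_sum, Fintype.sum_pi_single', mul_one]
    _ = outDist G (Wn (margZ W) n) z := by
        simp only [← margZ_bcWn, ← mul_sum]
        rfl

/-- The decoder which accepts `y` if its last `k` letters lie in the set that `A` assigns to its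
first `n` letters. -/
def tailDecoder [Fintype Y] (A : (Fin n → Y) → Set (Fin k → Y)) : Finset (Fin (n + k) → Y) :=
  {y | (fun j => y (Fin.natAdd n j)) ∈ A fun i => y (Fin.castAdd k i)}

/-- The decoder which accepts `z` if its first `n` letters lie in `B`. -/
def headDecoder [Fintype Z] (k : ℕ) (B : Set (Fin n → Z)) : Finset (Fin (n + k) → Z) :=
  {z | (fun i => z (Fin.castAdd k i)) ∈ B}

lemma compl_tailDecoder [Fintype Y] (A : (Fin n → Y) → Set (Fin k → Y)) :
    (tailDecoder A)ᶜ = tailDecoder fun y => (A y)ᶜ := by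
  ext y
  simp [tailDecoder]

lemma compl_headDecoder [Fintype Z] (B : Set (Fin n → Z)) :
    (headDecoder k B)ᶜ = headDecoder k Bᶜ := by
  ext z
  simp [headDecoder]

lemma sum_fbLaw_tailDecoder [Fintype Y] [Fintype Z] (hG : IsPMF G) (c : (Fin n → Y) → Fin k → X)
    (W : X → Y → Z → ℝ) (A : (Fin n → Y) → Set (Fin k → Y)) :
    ∑ x, ∑ y ∈ tailDecoder A, ∑ z, fbLaw (n + k) W (feedbackEncoder G c) x y z
      = ∑ y, outDist G (Wn (margY W) n) y * prob (Wn (margY W) k (c y)) (A y) := by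
  rw [sum_comm, tailDecoder, sum_filter, sum_eq_sum_append]
  simp only [sum_fbLaw_feedbackEncoder_append_left hG, Fin.append_left, Fin.append_right, prob,
    Set.indicator_apply, mul_sum, mul_ite, mul_zero]

lemma sum_fbLaw_headDecoder [Fintype Y] [Fintype Z] (hG : IsPMF G) (c : (Fin n → Y) → Fin k → X)
    {W : X → Y → Z → ℝ} (hW : IsBC W) (B : Set (Fin n → Z)) :
    ∑ x, ∑ y, ∑ z ∈ headDecoder k B, fbLaw (n + k) W (feedbackEncoder G c) x y z
      = prob (outDist G (Wn (margZ W) n)) B := by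
  calc _ = ∑ z ∈ headDecoder k B, ∑ x, ∑ y, fbLaw (n + k) W (feedbackEncoder G c) x y z :=
        (sum_congr rfl fun x _ => sum_comm).trans sum_comm
    _ = _ := by
        rw [headDecoder, sum_filter, sum_eq_sum_append]
        simp only [Fin.append_left, sum_ite_irrel, sum_const_zero, prob, Set.indicator_apply,
          sum_fbLaw_feedbackEncoder_append_right hG c hW]

end FeedbackEncoder

/-! ### Achievability -/

section FeedbackCode

variable {X Y Z σ : Type*} [Fintype X] [Fintype Y] [Fintype Z] {W : X → Y → Z → ℝ}
  {n k kY kZ : ℕ} {q : (Fin n → Y) → ℝ} {G : Fin kZ → (Fin n → X) → ℝ}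
  {D : Fin kZ → Set (Fin n → Z)} {c : σ → Fin k → X} {E : σ → Set (Fin k → Y)}
  {f : Fin kY → (Fin n → Y) → σ} {l : ℝ}

lemma average_sum_fbLaw_tailDecoder (hG : ∀ m, IsPMF (G m)) (c : (Fin n → Y) → Fin k → X)
    (W : X → Y → Z → ℝ) (A : (Fin n → Y) → Set (Fin k → Y)) :
    (kZ : ℝ)⁻¹ * ∑ m, ∑ x, ∑ y ∈ tailDecoder A, ∑ z,
        fbLaw (n + k) W (feedbackEncoder (G m) c) x y z
      = ∑ y, outDist (outDist uniform G) (Wn (margY W) n) y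
          * prob (Wn (margY W) k (c y)) (A y) := by
  simp only [sum_fbLaw_tailDecoder (hG _), outDist_outDist, sum_outDist_mul uniform, uniform,
    Fintype.card_fin, mul_sum]

lemma average_sum_fbLaw_headDecoder [NeZero kY] (hW : IsBC W) {g : (Fin n → X) → ℝ} (hg : IsPMF g)
    (c : Fin kY → (Fin n → Y) → Fin k → X) (B : Set (Fin n → Z)) :
    (kY : ℝ)⁻¹ * ∑ m, ∑ x, ∑ y, ∑ z ∈ headDecoder k B,
        fbLaw (n + k) W (feedbackEncoder g (c m)) x y z
      = prob (outDist g (Wn (margZ W) n)) B := by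
  simp only [sum_fbLaw_headDecoder hg _ hW, sum_const, card_univ, Fintype.card_fin, nsmul_eq_mul]
  exact inv_mul_cancel_left₀ (NeZero.ne _) _

lemma isPMF_outDist_average [NeZero kZ] (hW : IsBC W) (hG : ∀ m, IsPMF (G m)) :
    IsPMF (outDist (outDist uniform G) (Wn (margY W) n)) :=
  isPMF_outDist (isPMF_outDist isPMF_uniform ⟨fun m => (hG m).1, fun m => (hG m).2⟩)
    (isChannel_Wn (isChannel_margY hW) n)

lemma isFBIDCode_feedbackEncoder [NeZero kY] [NeZero kZ] (hW : IsBC W)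
    (hG : IsOutputDominatedIDCode (Wn (margZ W) n) (Wn (margY W) n) q G D l)
    (hc : Identifies (fun v => Wn (margY W) k (c v)) E l)
    (hf : Pairwise fun m m' => prob q {y | f m y = f m' y} ≤ l) (hl : 0 ≤ l) :
    IsFBIDCode (n + k) kY kZ W (fun mY mZ => feedbackEncoder (G mZ) fun y => c (f mY y))
      (fun mY => tailDecoder fun y => E (f mY y)) (fun mZ => headDecoder k (D mZ))
      l (5 * l) l l := by
  refine ⟨fun mY mZ => isFBEncoder_feedbackEncoder (hG.isPMF mZ) _, fun mY => ?_,
    fun mY mY' h => ?_, fun mZ => ?_, fun mZ mZ' h => ?_⟩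
  · rw [compl_tailDecoder, average_sum_fbLaw_tailDecoder hG.isPMF]
    exact (isPMF_outDist_average hW hG.isPMF).sum_mul_le fun y => hc.prob_compl_le _
  · rw [average_sum_fbLaw_tailDecoder hG.isPMF]
    have htail := (isPMF_outDist_average hW hG.isPMF).sum_mul_le_prob_add
      (f := fun y => prob (Wn (margY W) k (c (f mY y))) (E (f mY' y)))
      (A := {y | f mY y = f mY' y}) hl
      (fun y => ((isChannel_Wn (isChannel_margY hW) k).isPMF _).prob_le_one _)
      fun y hy => hc.prob_le_of_ne _ _ hy
    linarith [hG.prob_average_le {y | f mY y = f mY' y}, hf h]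
  · rw [compl_headDecoder, average_sum_fbLaw_headDecoder hW (hG.isPMF mZ)]
    exact hG.identifies.prob_compl_le mZ
  · rw [average_sum_fbLaw_headDecoder hW (hG.isPMF mZ)]
    exact hG.identifies.prob_le_of_ne mZ mZ' h

lemma IsFBIDCode.mono {Q : Fin kY → Fin kZ → (i : ℕ) → (Fin i → X) → (Fin i → Y) → X → ℝ}
    {DY : Fin kY → Finset (Fin n → Y)} {DZ : Fin kZ → Finset (Fin n → Z)}
    {l₁ l₂ l₃ l₄ l₁' l₂' l₃' l₄' : ℝ} (h : IsFBIDCode n kY kZ W Q DY DZ l₁ l₂ l₃ l₄)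
    (h₁ : l₁ ≤ l₁') (h₂ : l₂ ≤ l₂') (h₃ : l₃ ≤ l₃') (h₄ : l₄ ≤ l₄') :
    IsFBIDCode n kY kZ W Q DY DZ l₁' l₂' l₃' l₄' :=
  ⟨h.1, fun m => (h.2.1 m).trans h₁, fun m m' e => (h.2.2.1 m m' e).trans h₂,
    fun m => (h.2.2.2.1 m).trans h₃, fun m m' e => (h.2.2.2.2 m m' e).trans h₄⟩

lemma identifies_univ_of_subsingleton {κ : Type*} [Subsingleton κ] (Q : κ → Y → ℝ) (hl : 0 ≤ l) :
    Identifies Q (fun _ => Set.univ) l :=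
  ⟨fun m => by rwa [Set.compl_univ, prob_empty], fun _ _ h => absurd (Subsingleton.elim _ _) h⟩

end FeedbackCode

section Achievability

variable {X Y Z : Type*} [Fintype X] [Fintype Y] [Fintype Z]

/-- `k` messages at blocklength `N` realize the identification rate `R`: there is a single message
if `R = 0`, and at least `exp (exp (N * R))` messages if `R > 0`. -/
structure HasIDRate (R : ℝ) (N k : ℕ) : Prop where
  pos : 0 < k
  le_log_log : 0 < R → R ≤ 1 / N * log (log k)
  eq_one : R = 0 → k = 1

lemma hasIDRate_zero (N : ℕ) : HasIDRate 0 N 1 :=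
  ⟨one_pos, fun h => absurd h (lt_irrefl 0), fun _ => rfl⟩

lemma eventually_hasIDRate_idSize {R R' : ℝ} (hR : 0 < R) (hRR' : R < R') (k : ℕ) :
    ∀ᶠ n : ℕ in atTop, HasIDRate R (n + k) (idSize R' n) := by
  filter_upwards [eventually_gt_atTop 0,
    tendsto_natCast_atTop_atTop.eventually_ge_atTop (k * R / (R' - R))] with n hn hk
  refine ⟨idSize_pos R' n, fun _ => ?_, fun h => absurd h hR.ne'⟩
  rw [div_le_iff₀ (sub_pos.2 hRR')] at hk
  rw [one_div_mul_eq_div, le_div_iff₀' (Nat.cast_pos.2 (Nat.add_pos_left hn k)), Nat.cast_add]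
  linarith [mul_le_log_log_idSize R' n]

/-- The bound on the rate to the terminal with feedback under the input law `P`: the entropy of its
output if its channel `W` has positive capacity, and zero otherwise. -/
def feedbackRate (P : X → ℝ) (W : X → Y → ℝ) : ℝ :=
  if ∃ P' : X → ℝ, IsPMF P' ∧ 0 < mutInf P' W then entH (outDist P W) else 0

lemma exists_hashing_code {P : X → ℝ} {W : X → Y → ℝ} (hP : IsPMF P) (hW : IsChannel W) {R l : ℝ}
    (hR : R ∈ insert 0 (Set.Ioo 0 (feedbackRate P W))) (hl : 0 < l) :
    ∃ (L k : ℕ) (c : Fin L → Fin k → X) (E : Fin L → Set (Fin k → Y)),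
      Identifies (fun v => Wn W k (c v)) E l ∧
      ∀ᶠ n : ℕ in atTop, ∃ (kY : ℕ) (f : Fin kY → (Fin n → Y) → Fin L), HasIDRate R (n + k) kY ∧
        Pairwise fun m m' => prob (iid (outDist P W)) {y | f m y = f m' y} ≤ l := by
  rcases hR with rfl | ⟨hpos, hlt⟩
  · exact ⟨1, 0, fun _ => Fin.elim0, _, identifies_univ_of_subsingleton _ hl.le,
      .of_forall fun n => ⟨1, fun _ _ => 0, hasIDRate_zero _, Subsingleton.pairwise⟩⟩
  rw [feedbackRate] at hlt
  split_ifs at hlt with hcap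
  · obtain ⟨P', hP', hI⟩ := hcap
    obtain ⟨R', hRR', hR'⟩ := exists_between hlt
    obtain ⟨k, c, E, hc⟩ := exists_block_code_of_mutInf_pos hP' hW hI (Fin ⌈6 / l⌉₊) hl
    refine ⟨_, k, c, E, hc, ?_⟩
    filter_upwards [eventually_exists_hashing (isPMF_outDist hP hW) (hpos.trans hRR').le hR' hl
      ((Nat.le_ceil _).trans_eq (congrArg Nat.cast (Fintype.card_fin _).symm)),
      eventually_hasIDRate_idSize hpos hRR' k] with n ⟨f, hf⟩ hrate
    exact ⟨_, f, hrate, hf⟩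
  · exact absurd hlt hpos.not_gt

lemma eventually_exists_idCode {P : X → ℝ} {V : X → Z → ℝ} {W : X → Y → ℝ} (hP : IsPMF P)
    (hV : IsChannel V) (hW : IsChannel W) {R l : ℝ}
    (hR : R ∈ insert 0 (Set.Ioo 0 (mutInf P V))) (hl : 0 < l) (k : ℕ) :
    ∀ᶠ n : ℕ in atTop, ∃ (kZ : ℕ) (G : Fin kZ → (Fin n → X) → ℝ)
      (D : Fin kZ → Set (Fin n → Z)), HasIDRate R (n + k) kZ ∧
      IsOutputDominatedIDCode (Wn V n) (Wn W n) (iid (outDist P W)) G D l := by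
  rcases hR with rfl | ⟨hpos, hlt⟩
  · refine .of_forall fun n => ⟨1, fun _ => iid P, _, hasIDRate_zero _, fun _ => isPMF_iid hP,
      identifies_univ_of_subsingleton _ hl.le, fun B => ?_⟩
    have hq := (isPMF_iid (ι := Fin n) (isPMF_outDist hP hW)).prob_nonneg B
    rw [outDist_outDist, outDist_iid_Wn, prob_outDist, ← sum_mul, isPMF_uniform.2, one_mul]
    linarith
  · obtain ⟨R', hRR', hR'⟩ := exists_between hlt
    filter_upwards [eventually_exists_isOutputDominatedIDCode hP hV hW (hpos.trans hRR') hR' hl,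
      eventually_hasIDRate_idSize hpos hRR' k] with n ⟨G, D, hG⟩ hrate
    exact ⟨_, G, D, hrate, hG⟩

lemma fbAchievable_of_mem {W : X → Y → Z → ℝ} (hW : IsBC W) {P : X → ℝ} (hP : IsPMF P) {a b : ℝ}
    (ha : a ∈ insert 0 (Set.Ioo 0 (feedbackRate P (margY W))))
    (hb : b ∈ insert 0 (Set.Ioo 0 (mutInf P (margZ W)))) : FBAchievable W (a, b) := by
  refine ⟨ha.elim Eq.ge fun h => h.1.le, hb.elim Eq.ge fun h => h.1.le,
    fun l₁ l₂ l₃ l₄ h₁ h₂ h₃ h₄ => ?_⟩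
  obtain ⟨l, hl, hl₁, hl₂, hl₃, hl₄⟩ :
      ∃ l : ℝ, 0 < l ∧ l ≤ l₁ ∧ 5 * l ≤ l₂ ∧ l ≤ l₃ ∧ l ≤ l₄ :=
    ⟨min l₁ (min (l₂ / 5) (min l₃ l₄)), by positivity, by simp,
      (le_div_iff₀' (by norm_num)).1 (by simp), by simp, by simp⟩
  obtain ⟨L, k, c, E, hc, hY⟩ := exists_hashing_code hP (isChannel_margY hW) ha hl
  obtain ⟨n₀, hn₀⟩ := eventually_atTop.1
    (hY.and (eventually_exists_idCode hP (isChannel_margZ hW) (isChannel_margY hW) hb hl k))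
  refine ⟨n₀ + k, fun N hN => ?_⟩
  obtain ⟨n, rfl⟩ := Nat.exists_eq_add_of_le' ((Nat.le_add_left k n₀).trans hN)
  obtain ⟨⟨kY, f, hrateY, hf⟩, kZ, G, D, hrateZ, hG⟩ := hn₀ n (Nat.add_le_add_iff_right.1 hN)
  have : NeZero kY := ⟨hrateY.pos.ne'⟩
  have : NeZero kZ := ⟨hrateZ.pos.ne'⟩
  exact ⟨kY, kZ, _, _, _, (isFBIDCode_feedbackEncoder hW hG hc hf hl.le).mono hl₁ hl₂ hl₃ hl₄,
    ⟨hrateY.le_log_log, hrateY.eq_one⟩, ⟨hrateZ.le_log_log, hrateZ.eq_one⟩⟩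

lemma mem_closure_insert_zero_Ioo {a b : ℝ} (ha : 0 ≤ a) (hab : a ≤ b) :
    a ∈ closure (insert 0 (Set.Ioo 0 b)) := by
  rcases ha.eq_or_lt with rfl | hpos
  · exact subset_closure (Set.mem_insert _ _)
  · refine closure_mono (Set.subset_insert _ _) ?_
    rw [closure_Ioo (hpos.trans_le hab).ne]
    exact ⟨ha, hab⟩

end Achievability

/-- **Theorem 11.** Inner bound on the ID capacity region of the
BC with one-sided feedback from Terminal Y. -/
theorem bc_fb_id_inner_bound
    {X Y Z : Type} [Fintype X] [Fintype Y] [Fintype Z]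
    [Nonempty X] [Nonempty Y] [Nonempty Z]
    (W : X → Y → Z → ℝ) (hW : IsBC W) :
    {p : ℝ × ℝ | 0 ≤ p.1 ∧ 0 ≤ p.2 ∧
        ∃ P : X → ℝ, IsPMF P ∧
          p.1 ≤ (if ∃ P' : X → ℝ, IsPMF P' ∧ 0 < mutInf P' (margY W) then
                    entH (outDist P (margY W)) else 0) ∧
          p.2 ≤ mutInf P (margZ W)}
      ⊆ closure {p : ℝ × ℝ | FBAchievable W p} := by
  rintro ⟨a, b⟩ ⟨ha, hb, P, hP, haY, hbZ⟩
  have hmem : (a, b) ∈ closure (insert 0 (Set.Ioo 0 (feedbackRate P (margY W))) ×ˢ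
      insert 0 (Set.Ioo 0 (mutInf P (margZ W)))) := by
    rw [closure_prod_eq]
    exact ⟨mem_closure_insert_zero_Ioo ha haY, mem_closure_insert_zero_Ioo hb hbZ⟩
  exact closure_mono (fun p hp => fbAchievable_of_mem hW hP hp.1 hp.2) hmem
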